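/- arXiv:1011.4884 — 2 statements merged into one kernel-verified Lean document; each statement's English description precedes it below -/
import Mathlib

section
/- Let f : ℂⁿ → ℂ be a mixed polynomial that depends effectively on all its variables and satisfies f(0) = 0. If f is Newton strongly non-degenerate, then both f(Sing f) and S(f) are bounded subsets of ℂ. -/
open Complex Filter Finset

noncomputable section

abbrev MixedCoeff (n : ℕ) := ((Fin n → ℕ) × (Fin n → ℕ)) →₀ ℂ

namespace Mixed

variable {n : ℕ}

/-- Evaluation of a mixed polynomial given by its coefficient function `c`:
`f(z) = Σ c(ν,μ) zᵛ z̄ᵘ`. -/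
def eval (c : MixedCoeff n) (z : Fin n → ℂ) : ℂ :=
  c.sum fun p a => a * (∏ i, z i ^ p.1 i) * ∏ i, (starRingEnd ℂ) (z i) ^ p.2 i

/-- `∂f/∂z_i` evaluated at `(z, z̄)`. -/
def dz (c : MixedCoeff n) (i : Fin n) (z : Fin n → ℂ) : ℂ :=
  c.sum fun p a => a * (p.1 i) * (∏ j, z j ^ (p.1 j - if j = i then 1 else 0)) *
    ∏ j, (starRingEnd ℂ) (z j) ^ p.2 j

/-- `∂f/∂z̄_i` evaluated at `(z, z̄)`. -/
def dzbar (c : MixedCoeff n) (i : Fin n) (z : Fin n → ℂ) : ℂ :=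
  c.sum fun p a => a * (p.2 i) * (∏ j, z j ^ p.1 j) *
    ∏ j, (starRingEnd ℂ) (z j) ^ (p.2 j - if j = i then 1 else 0)

/-- The singular locus of `f` as a real map `ℝ²ⁿ → ℝ²`. -/
def Sing (c : MixedCoeff n) : Set (Fin n → ℂ) :=
  {z | ¬ Function.Surjective ⇑(fderiv ℝ (eval c) z)}

/-- The Milnor set `M(f)`. -/
def Milnor (c : MixedCoeff n) : Set (Fin n → ℂ) :=
  {z | ∃ (l : ℝ) (m : ℂ), m ≠ 0 ∧
    ∀ i, (l : ℂ) * z i = m * (starRingEnd ℂ) (dz c i z) + (starRingEnd ℂ) m * dzbar c i z}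

/-- The set `S(f)` of asymptotic ρ-nonregular values. -/
def Sset (c : MixedCoeff n) : Set ℂ :=
  {v | ∃ zk : ℕ → (Fin n → ℂ), (∀ k, zk k ∈ Milnor c) ∧
    Tendsto (fun k => ‖zk k‖) atTop atTop ∧
    Tendsto (fun k => eval c (zk k)) atTop (nhds v)}

/-- The point of `ℝⁿ` attached to the exponent pair `(ν,μ)`, namely `ν+μ`. -/
def suppPt (p : (Fin n → ℕ) × (Fin n → ℕ)) : Fin n → ℝ := fun i => ((p.1 i + p.2 i : ℕ) : ℝ)

/-- The support of `f`, as a subset of `ℝⁿ`. -/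
def suppPts (c : MixedCoeff n) : Set (Fin n → ℝ) := suppPt '' (c.support : Set _)

/-- The Newton polyhedron `Γ₀(f)`: convex hull of `{0} ∪ supp(f)`. -/
def Gamma0 (c : MixedCoeff n) : Set (Fin n → ℝ) := convexHull ℝ (insert 0 (suppPts c))

/-- `supp(f)‾`: the convex hull of `supp(f) \ {0}`. -/
def suppBar (c : MixedCoeff n) : Set (Fin n → ℝ) := convexHull ℝ (suppPts c \ {0})

/-- `F` is a face of the (compact convex) set `C`: either `C` itself or the set of
minimizers on `C` of a linear functional, and nonempty. -/
def IsFaceOf (C F : Set (Fin n → ℝ)) : Prop :=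
  F.Nonempty ∧ (F = C ∨ ∃ a : Fin n → ℝ,
    F = {x ∈ C | ∀ y ∈ C, ∑ i, a i * x i ≤ ∑ i, a i * y i})

/-- `Δ` is a face of the Newton boundary at infinity `Γ⁺(f)`: a face of `Γ₀(f)` not
containing the origin. -/
def IsGammaPlusFace (c : MixedCoeff n) (Δ : Set (Fin n → ℝ)) : Prop :=
  IsFaceOf (Gamma0 c) Δ ∧ (0 : Fin n → ℝ) ∉ Δ

/-- `Γ⁺(f)` as a subset of `ℝⁿ`: the union of the faces of `Γ₀(f)` not containing `0`. -/
def GammaPlusSet (c : MixedCoeff n) : Set (Fin n → ℝ) :=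
  {x | ∃ Δ, IsGammaPlusFace c Δ ∧ x ∈ Δ}

/-- The truncation `f_Δ` of `f` to a subset `Δ ⊆ ℝⁿ`. -/
def trunc (c : MixedCoeff n) (Δ : Set (Fin n → ℝ)) : MixedCoeff n :=
  @Finsupp.filter _ _ _ (fun p => suppPt p ∈ Δ) (Classical.decPred _) c

/-- Newton non-degeneracy: for every face `Δ` of `Γ⁺(f)`,
`Sing f_Δ ∩ f_Δ⁻¹(0) ∩ (ℂ*)ⁿ = ∅`. -/
def NewtonNonDeg (c : MixedCoeff n) : Prop :=
  ∀ Δ, IsGammaPlusFace c Δ → ∀ z : Fin n → ℂ, (∀ i, z i ≠ 0) →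
    eval (trunc c Δ) z = 0 → z ∉ Sing (trunc c Δ)

/-- Newton strong non-degeneracy: for every face `Δ` of `Γ⁺(f)`,
`Sing f_Δ ∩ (ℂ*)ⁿ = ∅`. -/
def NewtonStronglyNonDeg (c : MixedCoeff n) : Prop :=
  ∀ Δ, IsGammaPlusFace c Δ → ∀ z : Fin n → ℂ, (∀ i, z i ≠ 0) →
    z ∉ Sing (trunc c Δ)

/-- `Δ` is a bad face of `supp(f)‾`. -/
def IsBadFace (c : MixedCoeff n) (Δ : Set (Fin n → ℝ)) : Prop :=
  IsFaceOf (suppBar c) Δ ∧ (0 : Fin n → ℝ) ∈ affineSpan ℝ Δ ∧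
    ∃ a : Fin n → ℝ, (∃ i, a i < 0) ∧ (∃ j, 0 < a j) ∧
      {x ∈ suppBar c | ∑ i, a i * x i = 0} = Δ

/-- `f` depends effectively on all its variables. -/
def EffectiveAll (c : MixedCoeff n) : Prop :=
  ∀ i, ∃ p ∈ c.support, 0 < p.1 i + p.2 i

/-- The Euclidean norm on `ℂⁿ`. -/
def norm2 (v : Fin n → ℂ) : ℝ := Real.sqrt (∑ i, Complex.normSq (v i))

end Mixed

namespace Mixed

open Topology

lemma ultra_lim {E : Type*} [NormedAddCommGroup E] [ProperSpace E] (F : Ultrafilter ℕ)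
    (u : ℕ → E) (R : ℝ) (h : ∀ k, ‖u k‖ ≤ R) : ∃ l, Tendsto u F (𝓝 l) := by
  have hc : IsCompact (Metric.closedBall (0 : E) R) := isCompact_closedBall 0 R
  obtain ⟨l, -, hl⟩ := hc.ultrafilter_le_nhds (F.map u) (by
    rw [le_principal_iff]
    change ∀ᶠ k in (F : Filter ℕ), u k ∈ Metric.closedBall (0 : E) R
    exact Filter.Eventually.of_forall (fun k => by simpa using h k))
  exact ⟨l, hl⟩

lemma key {ι E α : Type*} [Finite ι] [NormedAddCommGroup E] [NormedSpace ℝ E]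
    [FiniteDimensional ℝ E] (F : Filter α) [NeBot F] (X : α → E) (L : ι → E →ₗ[ℝ] ℝ)
    (B : Set ι) (r : ι → ℝ)
    (hB : ∀ j ∈ B, Tendsto (fun k => L j (X k)) F (𝓝 (r j)))
    (hN : ∀ j, j ∉ B → Tendsto (fun k => L j (X k)) F atBot) :
    ∃ Y P : E, (∀ j ∈ B, L j Y = r j) ∧ (∀ j ∈ B, L j P = 0) ∧ (∀ j, j ∉ B → L j P < 0) := by
  classical
  have := Fintype.ofFinite ι
  let A : E →ₗ[ℝ] (B → ℝ) := LinearMap.pi (fun j => L j)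
  have hA : Tendsto (fun k => A (X k)) F (𝓝 (fun j : B => r j)) := by
    rw [tendsto_pi_nhds]
    intro j
    exact hB j j.2
  have hcl : IsClosed (LinearMap.range A : Set (B → ℝ)) :=
    Submodule.closed_of_finiteDimensional _
  have hmem : (fun j : B => r j) ∈ LinearMap.range A :=
    hcl.mem_of_tendsto hA (Eventually.of_forall fun k => LinearMap.mem_range_self A _)
  obtain ⟨R, hR⟩ := A.rangeRestrict.exists_rightInverse_of_surjective A.range_rangeRestrict
  have hR' : ∀ y : LinearMap.range A, A (R y) = y := by
    intro y
    have := congrArg (fun f => ((f y : LinearMap.range A) : B → ℝ)) hR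
    simpa using this
  let Yk : α → E := fun k => R (A.rangeRestrict (X k))
  let Y : E := R ⟨_, hmem⟩
  have hYk : Tendsto Yk F (𝓝 Y) := by
    have hc : Continuous R := R.continuous_of_finiteDimensional
    refine (hc.tendsto _).comp ?_
    rw [tendsto_subtype_rng]
    exact hA
  have h0 : ∀ k, ∀ j ∈ B, L j (X k - Yk k) = 0 := by
    intro k j hj
    have := congrFun (hR' (A.rangeRestrict (X k))) ⟨j, hj⟩
    have h2 : L j (Yk k) = L j (X k) := this
    rw [map_sub, h2, sub_self]
  have hneg : ∀ j, j ∉ B → ∀ᶠ k in F, L j (X k - Yk k) < 0 := by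
    intro j hj
    have hc : Continuous (L j) := (L j).continuous_of_finiteDimensional
    have h1 : Tendsto (fun k => L j (Yk k)) F (𝓝 (L j Y)) := (hc.tendsto _).comp hYk
    have h2 := (hN j hj).atBot_add h1.neg
    filter_upwards [h2.eventually_lt_atBot 0] with k hk
    rw [map_sub]; linarith
  have hall : ∀ᶠ k in F, ∀ j, j ∉ B → L j (X k - Yk k) < 0 := by
    rw [eventually_all]
    intro j
    by_cases hj : j ∈ B
    · exact Eventually.of_forall fun k h => absurd hj h
    · filter_upwards [hneg j hj] with k hk _ using hk
  obtain ⟨k, hk⟩ := hall.exists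
  refine ⟨Y, X k - Yk k, ?_, h0 k, hk⟩
  intro j hj
  exact congrFun (hR' ⟨_, hmem⟩) ⟨j, hj⟩

/-- The monomial `z^ν z̄^μ`. -/
def mono (p : (Fin n → ℕ) × (Fin n → ℕ)) (z : Fin n → ℂ) : ℂ :=
  (∏ i, z i ^ p.1 i) * ∏ i, (starRingEnd ℂ) (z i) ^ p.2 i

lemma mono_mul (p : (Fin n → ℕ) × (Fin n → ℕ)) (a b : Fin n → ℂ) :
    mono p (fun i => a i * b i) = mono p a * mono p b := by
  simp only [mono, mul_pow, map_mul, Finset.prod_mul_distrib]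
  ring

lemma mono_ofReal (p : (Fin n → ℕ) × (Fin n → ℕ)) (r : Fin n → ℝ) :
    mono p (fun i => (r i : ℂ)) = ((∏ i, r i ^ (p.1 i + p.2 i) : ℝ) : ℂ) := by
  simp only [mono, Complex.conj_ofReal, ← Finset.prod_mul_distrib, ← pow_add]
  push_cast
  rfl

lemma norm_mono (p : (Fin n → ℕ) × (Fin n → ℕ)) (z : Fin n → ℂ) :
    ‖mono p z‖ = ∏ i, ‖z i‖ ^ (p.1 i + p.2 i) := by
  simp only [mono, norm_mul, norm_prod, norm_pow, RCLike.norm_conj, pow_add,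
    Finset.prod_mul_distrib]

lemma mono_ne_zero (p : (Fin n → ℕ) × (Fin n → ℕ)) (z : Fin n → ℂ) (hz : ∀ i, z i ≠ 0) :
    0 < ‖mono p z‖ := by
  rw [norm_mono]
  exact Finset.prod_pos fun i _ => pow_pos (norm_pos_iff.2 (hz i)) _

lemma log_norm_mono (p : (Fin n → ℕ) × (Fin n → ℕ)) (z : Fin n → ℂ) (hz : ∀ i, z i ≠ 0) :
    Real.log ‖mono p z‖ = ∑ i, suppPt p i * Real.log ‖z i‖ := by
  rw [norm_mono, Real.log_prod]
  · simp [suppPt, Real.log_pow]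
  · intro i _
    exact pow_ne_zero _ (norm_ne_zero_iff.2 (hz i))

lemma continuous_mono (p : (Fin n → ℕ) × (Fin n → ℕ)) : Continuous (mono p) := by
  unfold mono
  have : Continuous (starRingEnd ℂ) := Complex.continuous_conj
  fun_prop

/-- Size of the monomials. -/
def Mz (c : MixedCoeff n) (z : Fin n → ℂ) : ℝ := 1 + ∑ p ∈ c.support, ‖mono p z‖

lemma one_le_Mz (c : MixedCoeff n) (z : Fin n → ℂ) : 1 ≤ Mz c z := by
  have : 0 ≤ ∑ p ∈ c.support, ‖mono p z‖ := Finset.sum_nonneg fun _ _ => norm_nonneg _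
  unfold Mz; linarith

lemma mono_le_Mz (c : MixedCoeff n) (z : Fin n → ℂ) (p) (hp : p ∈ c.support) :
    ‖mono p z‖ ≤ Mz c z := by
  have := Finset.single_le_sum (f := fun p => ‖mono p z‖) (fun _ _ => norm_nonneg _) hp
  unfold Mz; linarith

/-- Coefficients of the logarithmic gradient form. -/
def gterm (m : ℂ) (i : Fin n) (p : (Fin n → ℕ) × (Fin n → ℕ)) (a w : ℂ) : ℂ :=
  m * (starRingEnd ℂ) (a * p.1 i * w) + (starRingEnd ℂ) m * (a * p.2 i * w)

def Gi (c : MixedCoeff n) (m : ℂ) (i : Fin n) (z : Fin n → ℂ) : ℂ :=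
  ∑ p ∈ c.support, gterm m i p (c p) (mono p z)

lemma eval_eq (c : MixedCoeff n) (z : Fin n → ℂ) :
    eval c z = ∑ p ∈ c.support, c p * mono p z := by
  simp only [eval, Finsupp.sum, mono, mul_assoc]

lemma prod_aux (z : Fin n → ℂ) (q : Fin n → ℕ) (i : Fin n) :
    z i * ((q i : ℂ) * ∏ j, z j ^ (q j - if j = i then 1 else 0)) = q i * ∏ j, z j ^ q j := by
  rcases Nat.eq_zero_or_pos (q i) with h | h
  · simp [h]
  · have h1 : z i = ∏ j, z j ^ (if j = i then 1 else 0) := by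
      simp [Finset.prod_ite_eq']
    rw [mul_left_comm]
    congr 1
    conv_lhs => rw [h1]
    rw [← Finset.prod_mul_distrib]
    refine Finset.prod_congr rfl fun j _ => ?_
    rw [← pow_add]
    congr 1
    split_ifs with hj
    · subst hj; omega
    · omega

lemma mul_dz (c : MixedCoeff n) (i : Fin n) (z : Fin n → ℂ) :
    z i * dz c i z = ∑ p ∈ c.support, c p * p.1 i * mono p z := by
  simp only [dz, Finsupp.sum, Finset.mul_sum, mono]
  refine Finset.sum_congr rfl fun p _ => ?_
  have := prod_aux z p.1 i
  linear_combination (c p * ∏ j, (starRingEnd ℂ) (z j) ^ p.2 j) * this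

lemma mul_dzbar (c : MixedCoeff n) (i : Fin n) (z : Fin n → ℂ) :
    (starRingEnd ℂ) (z i) * dzbar c i z = ∑ p ∈ c.support, c p * p.2 i * mono p z := by
  simp only [dzbar, Finsupp.sum, Finset.mul_sum, mono]
  refine Finset.sum_congr rfl fun p _ => ?_
  have := prod_aux (fun j => (starRingEnd ℂ) (z j)) p.2 i
  linear_combination (c p * ∏ j, (z j) ^ p.1 j) * this

lemma Gi_eq (c : MixedCoeff n) (m : ℂ) (i : Fin n) (z : Fin n → ℂ) :
    Gi c m i z = (starRingEnd ℂ) (z i) *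
      (m * (starRingEnd ℂ) (dz c i z) + (starRingEnd ℂ) m * dzbar c i z) := by
  have h1 := congrArg (starRingEnd ℂ) (mul_dz c i z)
  have h2 := mul_dzbar c i z
  rw [map_mul, map_sum] at h1
  have : Gi c m i z = m * ∑ p ∈ c.support, (starRingEnd ℂ) (c p * p.1 i * mono p z) +
      (starRingEnd ℂ) m * ∑ p ∈ c.support, c p * p.2 i * mono p z := by
    simp only [Gi, gterm, Finset.sum_add_distrib, Finset.mul_sum]
  rw [this, ← h1, ← h2]
  ring

lemma hasFDerivAt_prod (q : Fin n → ℕ) (z : Fin n → ℂ) :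
    HasFDerivAt (𝕜 := ℝ) (fun z : Fin n → ℂ => ∏ j, z j ^ q j)
      (∑ i, ((q i : ℂ) * ∏ j, z j ^ (q j - if j = i then 1 else 0)) •
        (ContinuousLinearMap.proj (R := ℝ) (φ := fun _ : Fin n => ℂ) i)) z := by
  have h : ∀ i ∈ (Finset.univ : Finset (Fin n)), HasFDerivAt (𝕜 := ℝ)
      (fun z : Fin n → ℂ => z i ^ q i)
      (((q i : ℂ) * z i ^ (q i - 1)) •
        (ContinuousLinearMap.proj (R := ℝ) (φ := fun _ : Fin n => ℂ) i)) z := by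
    intro i _
    have h1 : HasFDerivAt (𝕜 := ℝ) (fun z : Fin n → ℂ => z i)
      (ContinuousLinearMap.proj (R := ℝ) (φ := fun _ : Fin n => ℂ) i) z :=
      hasFDerivAt_apply i z
    have h2 := h1.pow (q i)
    refine h2.congr_fderiv ?_
    ext h
    simp
  have h3 := HasFDerivAt.finsetProd h
  refine h3.congr_fderiv ?_
  symm
  refine Finset.sum_congr rfl fun i _ => ?_
  rw [smul_smul]
  congr 1
  rw [← Finset.prod_erase_mul _ _ (Finset.mem_univ i)]
  simp only [if_true]
  have : ∏ x ∈ Finset.univ.erase i, z x ^ (q x - if x = i then 1 else 0) =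
      ∏ x ∈ Finset.univ.erase i, z x ^ q x := by
    refine Finset.prod_congr rfl fun j hj => ?_
    rw [if_neg (Finset.ne_of_mem_erase hj), Nat.sub_zero]
  rw [this]
  ring

lemma fderiv_eval (c : MixedCoeff n) (z h : Fin n → ℂ) :
    fderiv ℝ (eval c) z h = ∑ i, (dz c i z * h i + dzbar c i z * (starRingEnd ℂ) (h i)) := by
  have hconj : ∀ q : Fin n → ℕ, (fun z : Fin n → ℂ => ∏ j, (starRingEnd ℂ) (z j) ^ q j) =
      fun z => Complex.conjCLE (∏ j, z j ^ q j) := by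
    intro q; ext z; simp [map_prod]
  have hterm : ∀ p : (Fin n → ℕ) × (Fin n → ℕ), ∃ L : (Fin n → ℂ) →L[ℝ] ℂ, HasFDerivAt (𝕜 := ℝ)
      (fun z => c p * (∏ i, z i ^ p.1 i) * ∏ i, (starRingEnd ℂ) (z i) ^ p.2 i) L z ∧
      L h = ∑ i, (c p * (p.1 i) * (∏ j, z j ^ (p.1 j - if j = i then 1 else 0)) *
        (∏ j, (starRingEnd ℂ) (z j) ^ p.2 j) * h i + c p * (p.2 i) * (∏ j, z j ^ p.1 j) *
        (∏ j, (starRingEnd ℂ) (z j) ^ (p.2 j - if j = i then 1 else 0)) *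
          (starRingEnd ℂ) (h i)) := by
    intro p
    have h1 := (hasFDerivAt_prod p.1 z).const_mul (c p)
    have h2 := (Complex.conjCLE.hasFDerivAt (x := ∏ j, z j ^ p.2 j)).comp z
      (hasFDerivAt_prod p.2 z)
    rw [show (⇑conjCLE ∘ fun z : Fin n → ℂ => ∏ j, z j ^ p.2 j) =
      (fun z : Fin n → ℂ => ∏ j, (starRingEnd ℂ) (z j) ^ p.2 j) from (hconj _).symm] at h2
    refine ⟨_, h1.mul h2, ?_⟩
    simp [_root_.sum_apply, Finset.mul_sum, map_prod, map_sum,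
      Finset.sum_add_distrib]
    rw [add_comm]
    congr 1
    · refine Finset.sum_congr rfl fun i _ => ?_
      ring
    · refine Finset.sum_congr rfl fun i _ => ?_
      ring
  choose L hL hLh using hterm
  have hs := HasFDerivAt.fun_sum (u := c.support) (fun p _ => hL p)
  have he : eval c = fun z => ∑ p ∈ c.support,
      (c p * (∏ i, z i ^ p.1 i) * ∏ i, (starRingEnd ℂ) (z i) ^ p.2 i) := rfl
  rw [he, hs.fderiv]
  simp only [dz, dzbar, Finsupp.sum, Finset.sum_mul, ← Finset.sum_add_distrib]
  rw [Finset.sum_comm]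
  simp only [_root_.sum_apply, hLh]

lemma re_fderiv (c : MixedCoeff n) (m : ℂ) (z h : Fin n → ℂ) :
    ((starRingEnd ℂ) m * fderiv ℝ (eval c) z h).re =
     (∑ i, h i * (starRingEnd ℂ)
      (m * (starRingEnd ℂ) (dz c i z) + (starRingEnd ℂ) m * dzbar c i z)).re := by
  rw [fderiv_eval, Finset.mul_sum, Complex.re_sum, Complex.re_sum]
  refine Finset.sum_congr rfl fun i _ => ?_
  simp
  ring

lemma mem_Sing_of (c : MixedCoeff n) (m : ℂ) (hm : m ≠ 0) (z : Fin n → ℂ)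
    (h : ∀ i, m * (starRingEnd ℂ) (dz c i z) + (starRingEnd ℂ) m * dzbar c i z = 0) :
    z ∈ Sing c := by
  intro hs
  obtain ⟨v, hv⟩ := hs m
  have := re_fderiv c m z v
  rw [hv] at this
  simp only [h, map_zero, mul_zero, Finset.sum_const_zero, Complex.zero_re] at this
  rw [mul_comm, Complex.mul_conj, Complex.ofReal_re] at this
  exact hm (Complex.normSq_eq_zero.1 this)

lemma of_mem_Sing (c : MixedCoeff n) (z : Fin n → ℂ) (hz : z ∈ Sing c) :
    ∃ m : ℂ, ‖m‖ = 1 ∧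
      ∀ i, m * (starRingEnd ℂ) (dz c i z) + (starRingEnd ℂ) m * dzbar c i z = 0 := by
  set D := fderiv ℝ (eval c) z with hD
  have hlt : LinearMap.range (D : (Fin n → ℂ) →ₗ[ℝ] ℂ) < ⊤ := by
    rw [lt_top_iff_ne_top]
    intro h
    exact hz (LinearMap.range_eq_top.1 h)
  obtain ⟨φ, hφ, hle⟩ := Submodule.exists_le_ker_of_lt_top _ hlt
  -- φ w = re (conj m * w)
  set m : ℂ := ⟨φ 1, φ I⟩ with hmdef
  have hrep : ∀ w, φ w = ((starRingEnd ℂ) m * w).re := by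
    intro w
    have : w = w.re • (1 : ℂ) + w.im • I := by
      simp
    conv_lhs => rw [this]
    rw [map_add, map_smul, map_smul]
    simp [hmdef]
    ring
  have hm : m ≠ 0 := by
    intro h
    apply hφ
    ext w
    rw [hrep, h]; simp
  have hzero : ∀ i, m * (starRingEnd ℂ) (dz c i z) + (starRingEnd ℂ) m * dzbar c i z = 0 := by
    intro i
    set Q := m * (starRingEnd ℂ) (dz c i z) + (starRingEnd ℂ) m * dzbar c i z with hQ
    have h1 := re_fderiv c m z (Pi.single i Q)
    rw [← hrep] at h1
    have h2 : φ (fderiv ℝ (eval c) z (Pi.single i Q)) = 0 :=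
      hle (LinearMap.mem_range_self (D : (Fin n → ℂ) →ₗ[ℝ] ℂ) _)
    rw [h2, Finset.sum_eq_single i, Pi.single_eq_same, ← hQ, Complex.mul_conj,
      Complex.ofReal_re] at h1
    · exact Complex.normSq_eq_zero.1 h1.symm
    · intro j _ hj
      rw [Pi.single_eq_of_ne hj, zero_mul]
    · simp
  refine ⟨((‖m‖⁻¹ : ℝ) : ℂ) * m, ?_, ?_⟩
  · rw [norm_mul, Complex.norm_real, norm_inv, norm_norm]
    exact inv_mul_cancel₀ (norm_ne_zero_iff.2 hm)
  · intro i
    have := hzero i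
    rw [map_mul, Complex.conj_ofReal]
    linear_combination ((‖m‖⁻¹ : ℝ) : ℂ) * this

lemma tendsto_log_of_ne {α : Type*} (F : Filter α) (u : α → ℝ) (l : ℝ)
    (hl : l ≠ 0) (h : Tendsto u F (𝓝 l)) :
    Tendsto (fun k => Real.log (u k)) F (𝓝 (Real.log l)) := h.log hl

lemma tendsto_log_of_eq {α : Type*} (F : Filter α) (u : α → ℝ) (hu : ∀ k, 0 < u k)
    (h : Tendsto u F (𝓝 0)) :
    Tendsto (fun k => Real.log (u k)) F atBot :=
  Real.tendsto_log_nhdsGT_zero.comp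
    (tendsto_nhdsWithin_iff.2 ⟨h, Eventually.of_forall hu⟩)

/-- The functional `(x, t) ↦ a·x + b t`. -/
def lin (a : Fin n → ℝ) (b : ℝ) : ((Fin n → ℝ) × ℝ) →ₗ[ℝ] ℝ where
  toFun x := ∑ i, a i * x.1 i + b * x.2
  map_add' x y := by
    simp only [Prod.fst_add, Prod.snd_add, Pi.add_apply, mul_add, Finset.sum_add_distrib]; ring
  map_smul' r x := by
    simp only [Prod.smul_fst, Prod.smul_snd, Pi.smul_apply, smul_eq_mul, RingHom.id_apply,
      mul_add, Finset.mul_sum]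
    congr 1
    · exact Finset.sum_congr rfl fun i _ => by ring
    · ring

lemma lin_apply (a : Fin n → ℝ) (b : ℝ) (x : (Fin n → ℝ) × ℝ) :
    lin a b x = ∑ i, a i * x.1 i + b * x.2 := rfl

/-- Logarithmic coordinates. -/
def Xlog (c : MixedCoeff n) (z : Fin n → ℂ) : (Fin n → ℝ) × ℝ :=
  (fun i => Real.log ‖z i‖, Real.log (Mz c z))

lemma lin_Xlog_supp (c : MixedCoeff n) (z : Fin n → ℂ) (hz : ∀ i, z i ≠ 0) (p) :
    lin (suppPt p) (-1) (Xlog c z) = Real.log ‖mono p z / (Mz c z : ℂ)‖ := by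
  have hM := one_le_Mz c z
  rw [lin_apply, norm_div, Complex.norm_real, Real.norm_of_nonneg (by linarith),
    Real.log_div (mono_ne_zero p z hz).ne' (by linarith), log_norm_mono p z hz]
  simp [Xlog]; ring

lemma lin_Xlog_zero (c : MixedCoeff n) (z : Fin n → ℂ) :
    lin 0 (-1) (Xlog c z) = Real.log (1 / Mz c z) := by
  rw [lin_apply, one_div, Real.log_inv]
  simp [Xlog]

lemma norm_mono_div_le (c : MixedCoeff n) (z : Fin n → ℂ) (p) (hp : p ∈ c.support) :
    ‖mono p z / (Mz c z : ℂ)‖ ≤ 1 := by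
  have hM := one_le_Mz c z
  rw [norm_div, Complex.norm_real, Real.norm_of_nonneg (by linarith)]
  exact (div_le_one (by linarith)).2 (mono_le_Mz c z p hp)

lemma gterm_div (m : ℂ) (i : Fin n) (p) (a w : ℂ) (r : ℝ) :
    gterm m i p a (w / r) = gterm m i p a w / r := by
  simp only [gterm, map_mul, map_div₀, Complex.conj_ofReal]
  ring

lemma gterm_mul (m : ℂ) (i : Fin n) (p) (a w : ℂ) (r : ℝ) :
    gterm m i p a (r * w) = r * gterm m i p a w := by
  simp only [gterm, map_mul, Complex.conj_ofReal]
  ring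

lemma gterm_tendsto {F : Filter ℕ} {m : ℕ → ℂ} {w : ℕ → ℂ} {m0 w0 : ℂ} (i : Fin n) (p) (a : ℂ)
    (hm : Tendsto m F (𝓝 m0)) (hw : Tendsto w F (𝓝 w0)) :
    Tendsto (fun k => gterm (m k) i p a (w k)) F (𝓝 (gterm m0 i p a w0)) := by
  have hc : Continuous (fun x : ℂ × ℂ => gterm x.1 i p a x.2) := by
    unfold gterm
    have : Continuous (starRingEnd ℂ) := Complex.continuous_conj
    fun_prop
  exact (hc.tendsto (m0, w0)).comp (hm.prodMk_nhds hw)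

lemma Gi_div_tendsto (c : MixedCoeff n) {F : Filter ℕ} {m : ℕ → ℂ} {z : ℕ → Fin n → ℂ} {m0 : ℂ}
    {w : (Fin n → ℕ) × (Fin n → ℕ) → ℂ} (i : Fin n) (hm : Tendsto m F (𝓝 m0))
    (hw : ∀ p ∈ c.support, Tendsto (fun k => mono p (z k) / (Mz c (z k) : ℂ)) F (𝓝 (w p))) :
    Tendsto (fun k => Gi c (m k) i (z k) / (Mz c (z k) : ℂ)) F
      (𝓝 (∑ p ∈ c.support, gterm m0 i p (c p) (w p))) := by
  simp only [Gi, Finset.sum_div, ← gterm_div]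
  exact tendsto_finsetSum _ fun p hp => gterm_tendsto i p (c p) hm (hw p hp)

lemma exists_w (c : MixedCoeff n) (F : Ultrafilter ℕ) (z : ℕ → Fin n → ℂ) :
    ∃ w : (Fin n → ℕ) × (Fin n → ℕ) → ℂ,
    ∀ p ∈ c.support, Tendsto (fun k => mono p (z k) / (Mz c (z k) : ℂ)) F (𝓝 (w p)) := by
  have : ∀ p, ∃ w : ℂ, p ∈ c.support →
      Tendsto (fun k => mono p (z k) / (Mz c (z k) : ℂ)) F (𝓝 w) := by
    intro p
    by_cases hp : p ∈ c.support
    · obtain ⟨l, hl⟩ := ultra_lim F (fun k => mono p (z k) / (Mz c (z k) : ℂ)) 1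
        (fun k => norm_mono_div_le c (z k) p hp)
      exact ⟨l, fun _ => hl⟩
    · exact ⟨0, fun h => absurd h hp⟩
  choose w hw using this
  exact ⟨w, hw⟩

/-- The face cut out by the weight `v`. -/
def face (c : MixedCoeff n) (v : Fin n → ℝ) : Set (Fin n → ℝ) :=
  {x ∈ Gamma0 c | ∀ y ∈ Gamma0 c, ∑ i, (-v i) * x i ≤ ∑ i, (-v i) * y i}

lemma face_spec (c : MixedCoeff n) (v : Fin n → ℝ) (D : ℝ) (hD : 0 < D)
    (hle : ∀ p ∈ c.support, ∑ i, v i * suppPt p i ≤ D)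
    (hex : ∃ p ∈ c.support, ∑ i, v i * suppPt p i = D) :
    IsGammaPlusFace c (face c v) ∧
    ∀ p ∈ c.support, (suppPt p ∈ face c v ↔ ∑ i, v i * suppPt p i = D) := by
  have hmax : ∀ y ∈ Gamma0 c, ∑ i, v i * y i ≤ D := by
    have hconv : Convex ℝ {y : Fin n → ℝ | ∑ i, v i * y i ≤ D} := by
      refine convex_halfSpace_le (𝕜 := ℝ) (f := fun y : Fin n → ℝ => ∑ i, v i * y i) ?_ D
      constructor
      · intro x y; simp [mul_add, Finset.sum_add_distrib]
      · intro a x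
        simp only [Pi.smul_apply, smul_eq_mul, Finset.mul_sum]
        exact Finset.sum_congr rfl fun i _ => by ring
    refine fun y hy => convexHull_min ?_ hconv hy
    rintro x (rfl | ⟨p, hp, rfl⟩)
    · simpa using hD.le
    · exact hle p hp
  have hin : ∀ p ∈ c.support, suppPt p ∈ Gamma0 c := fun p hp =>
    subset_convexHull ℝ _ (Or.inr ⟨p, hp, rfl⟩)
  obtain ⟨p0, hp0, hp0D⟩ := hex
  have hmem : ∀ x ∈ Gamma0 c, (x ∈ face c v ↔ ∑ i, v i * x i = D) := by
    intro x hx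
    simp only [face, Set.mem_ofPred_eq, neg_mul, Finset.sum_neg_distrib, neg_le_neg_iff]
    constructor
    · rintro ⟨-, h⟩
      have := h _ (hin p0 hp0)
      linarith [hmax x hx]
    · intro h
      exact ⟨hx, fun y hy => by linarith [hmax y hy]⟩
  refine ⟨⟨⟨⟨suppPt p0, (hmem _ (hin p0 hp0)).2 hp0D⟩, Or.inr ⟨fun i => -v i, rfl⟩⟩, ?_⟩,
    fun p hp => hmem _ (hin p hp)⟩
  intro h
  have := (hmem 0 (subset_convexHull ℝ _ (Or.inl rfl))).1 h
  simp at this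
  linarith

lemma Gi_trunc (c : MixedCoeff n) (Δ : Set (Fin n → ℝ)) (m : ℂ) (i : Fin n) (a : Fin n → ℂ)
    (g : (Fin n → ℕ) × (Fin n → ℕ) → ℂ)
    (h1 : ∀ p ∈ c.support, suppPt p ∈ Δ → gterm m i p (c p) (mono p a) = g p)
    (h2 : ∀ p ∈ c.support, suppPt p ∉ Δ → g p = 0) :
    Gi (trunc c Δ) m i a = ∑ p ∈ c.support, g p := by
  classical
  have hs : (trunc c Δ).support ⊆ c.support := by
    intro p hp
    simp only [trunc, Finsupp.support_filter, Finset.mem_filter] at hp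
    exact hp.1
  rw [Gi, Finset.sum_subset hs]
  · refine Finset.sum_congr rfl fun p hp => ?_
    by_cases h : suppPt p ∈ Δ
    · rw [← h1 p hp h, trunc, Finsupp.filter_apply_pos (fun p => suppPt p ∈ Δ) _ h]
    · rw [h2 p hp h, trunc, Finsupp.filter_apply_neg (fun p => suppPt p ∈ Δ) _ h]
      simp [gterm]
  · intro p _ hp
    rw [Finsupp.notMem_support_iff.1 hp]
    simp [gterm]

lemma lojas (c : MixedCoeff n) (hnd : NewtonStronglyNonDeg c) :
    ∃ C : ℝ, ∃ ε : ℝ, 0 < ε ∧ ∀ z : Fin n → ℂ, (∀ i, z i ≠ 0) → ∀ m : ℂ, ‖m‖ = 1 →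
      C ≤ Mz c z → ∃ i, ε * Mz c z ≤ ‖Gi c m i z‖ := by
  by_contra hcon
  push Not at hcon
  have hk : ∀ k : ℕ, ∃ z : Fin n → ℂ, (∀ i, z i ≠ 0) ∧ ∃ m : ℂ, ‖m‖ = 1 ∧
      (k : ℝ) ≤ Mz c z ∧ ∀ i, ‖Gi c m i z‖ < 1 / ((k : ℝ) + 1) * Mz c z :=
    fun k => hcon k (1 / ((k : ℝ) + 1)) (by positivity)
  choose z hz m hm hM hG using hk
  let F : Ultrafilter ℕ := hyperfilter ℕ
  have hF : (F : Filter ℕ) ≤ atTop := Nat.hyperfilter_le_atTop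
  obtain ⟨m0, hm0⟩ := ultra_lim F m 1 (fun k => (hm k).le)
  have hm0n : ‖m0‖ = 1 := by
    have := hm0.norm
    simp only [hm] at this
    exact (tendsto_nhds_unique this tendsto_const_nhds)
  obtain ⟨w, hw⟩ := exists_w c F z
  -- phases
  let u : ℕ → Fin n → ℂ := fun k i => z k i / (‖z k i‖ : ℂ)
  have hu1 : ∀ k i, ‖u k i‖ = 1 := by
    intro k i
    simp only [u, norm_div, Complex.norm_real, norm_norm]
    exact div_self (norm_ne_zero_iff.2 (hz k i))
  have hu : ∀ i, ∃ l, Tendsto (fun k => u k i) F (𝓝 l) := fun i =>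
    ultra_lim F _ 1 (fun k => (hu1 k i).le)
  choose u0 hu0 using hu
  have hu0n : ∀ i, ‖u0 i‖ = 1 := by
    intro i
    have := (hu0 i).norm
    simp only [hu1] at this
    exact (tendsto_nhds_unique this tendsto_const_nhds)
  have hMpos : ∀ k, 0 < Mz c (z k) := fun k => by linarith [one_le_Mz c (z k)]
  have hMtop : Tendsto (fun k => Mz c (z k)) F atTop :=
    tendsto_atTop_mono hM (tendsto_natCast_atTop_atTop.mono_left hF)
  have hMinv : Tendsto (fun k => 1 / Mz c (z k)) F (𝓝 0) := by
    simp only [one_div]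
    exact tendsto_inv_atTop_zero.comp hMtop
  -- phases of w
  have hwphase : ∀ p ∈ c.support, w p = mono p u0 * (‖w p‖ : ℂ) := by
    intro p hp
    have h1 : Tendsto (fun k => mono p (u k)) F (𝓝 (mono p u0)) :=
      ((continuous_mono p).tendsto u0).comp (tendsto_pi_nhds.2 hu0)
    have h2 := h1.mul ((Complex.continuous_ofReal.tendsto _).comp (hw p hp).norm)
    refine tendsto_nhds_unique (hw p hp) (h2.congr fun k => ?_)
    have hzk : z k = fun i => u k i * ((‖z k i‖ : ℝ) : ℂ) := by
      ext i
      simp only [u]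
      rw [div_mul_cancel₀]
      exact_mod_cast norm_ne_zero_iff.2 (hz k i)
    have h3 : mono p (z k) = mono p (u k) * ((‖mono p (z k)‖ : ℝ) : ℂ) := by
      conv_lhs => rw [hzk]
      rw [mono_mul, mono_ofReal, norm_mono]
    simp only [Function.comp]
    rw [norm_div, Complex.norm_real, Real.norm_of_nonneg (hMpos k).le]
    conv_rhs => rw [h3]
    push_cast
    ring
  -- the key lemma
  let L : Option c.support → ((Fin n → ℝ) × ℝ) →ₗ[ℝ] ℝ := fun o =>
    match o with
    | none => lin 0 (-1)
    | some p => lin (suppPt p.1) (-1)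
  let B : Set (Option c.support) := {o | ∃ p, o = some p ∧ w p.1 ≠ 0}
  let r : Option c.support → ℝ := fun o =>
    match o with
    | none => 0
    | some p => Real.log ‖w p.1‖
  have hnormpos : ∀ k p, 0 < ‖mono p (z k) / (Mz c (z k) : ℂ)‖ := by
    intro k p
    rw [norm_div]
    refine div_pos (mono_ne_zero p _ (hz k)) ?_
    rw [Complex.norm_real]
    exact norm_pos_iff.2 (hMpos k).ne'
  obtain ⟨Y, P, hY, hP0, hPneg⟩ := key (F : Filter ℕ) (fun k => Xlog c (z k)) L B r
    (by
      rintro _ ⟨p, rfl, hp⟩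
      simp only [L, r, lin_Xlog_supp c _ (hz _)]
      exact tendsto_log_of_ne _ _ _ (norm_ne_zero_iff.2 hp) (hw p.1 p.2).norm)
    (by
      rintro (_ | p) hp
      · simp only [L, lin_Xlog_zero]
        exact tendsto_log_of_eq _ _ (fun k => by have := hMpos k; positivity) hMinv
      · have hp0 : w p.1 = 0 := by
          by_contra h
          exact hp ⟨p, rfl, h⟩
        simp only [L, lin_Xlog_supp c _ (hz _)]
        refine tendsto_log_of_eq _ _ (fun k => hnormpos k p.1) ?_
        have := (hw p.1 p.2).norm
        rwa [hp0, norm_zero] at this)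
  obtain ⟨v, D⟩ := P
  obtain ⟨y, e⟩ := Y
  have hD : 0 < D := by
    have : lin 0 (-1) (v, D) < 0 := hPneg none (by rintro ⟨p, h, -⟩; cases h)
    rw [lin_apply] at this
    simpa using this
  have hT1 : ∀ p ∈ c.support, w p ≠ 0 → ∑ i, v i * suppPt p i = D := by
    intro p hp hwp
    have : lin (suppPt p) (-1) (v, D) = 0 := hP0 (some ⟨p, hp⟩) ⟨⟨p, hp⟩, rfl, hwp⟩
    rw [lin_apply] at this
    simp only [mul_comm (v _)]
    dsimp only at this
    linarith
  have hT2 : ∀ p ∈ c.support, w p = 0 → ∑ i, v i * suppPt p i < D := by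
    intro p hp hwp
    have : lin (suppPt p) (-1) (v, D) < 0 := hPneg (some ⟨p, hp⟩) (by
      rintro ⟨q, hq, hne⟩
      cases hq
      exact hne hwp)
    rw [lin_apply] at this
    simp only [mul_comm (v _)]
    dsimp only at this
    linarith
  have hex : ∃ p ∈ c.support, w p ≠ 0 := by
    by_contra hno
    push Not at hno
    have h1 : Tendsto (fun k => 1 / Mz c (z k) +
        ∑ p ∈ c.support, ‖mono p (z k) / (Mz c (z k) : ℂ)‖) F
        (𝓝 (0 + ∑ p ∈ c.support, ‖w p‖)) :=
      hMinv.add (tendsto_finsetSum _ fun p hp => (hw p hp).norm)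
    have h2 : ∀ k, 1 / Mz c (z k) +
        ∑ p ∈ c.support, ‖mono p (z k) / (Mz c (z k) : ℂ)‖ = 1 := by
      intro k
      simp only [norm_div, Complex.norm_real, Real.norm_of_nonneg (hMpos k).le]
      rw [← Finset.sum_div, ← add_div]
      exact div_self (hMpos k).ne'
    simp only [h2] at h1
    have h3 := tendsto_nhds_unique h1 tendsto_const_nhds
    rw [Finset.sum_eq_zero (fun p hp => by rw [hno p hp, norm_zero])] at h3
    norm_num at h3
  obtain ⟨hface, hiff⟩ := face_spec c v D hD
    (fun p hp => by
      by_cases h : w p = 0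
      · exact (hT2 p hp h).le
      · exact (hT1 p hp h).le)
    (by obtain ⟨p, hp, h⟩ := hex; exact ⟨p, hp, hT1 p hp h⟩)
  -- the limit point
  let a : Fin n → ℂ := fun i => u0 i * ((Real.exp (y i) : ℝ) : ℂ)
  have ha : ∀ i, a i ≠ 0 := by
    intro i
    refine mul_ne_zero (norm_ne_zero_iff.1 (by rw [hu0n]; norm_num)) ?_
    exact_mod_cast (Real.exp_pos _).ne'
  have hmono : ∀ p ∈ c.support, w p ≠ 0 → mono p a = ((Real.exp e : ℝ) : ℂ) * w p := by
    intro p hp hwp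
    have h1 : lin (suppPt p) (-1) (y, e) = Real.log ‖w p‖ :=
      hY (some ⟨p, hp⟩) ⟨⟨p, hp⟩, rfl, hwp⟩
    rw [lin_apply] at h1
    dsimp only at h1
    have h2 : ∏ i, Real.exp (y i) ^ (p.1 i + p.2 i) = Real.exp e * ‖w p‖ := by
      have : ∑ i, suppPt p i * y i = e + Real.log ‖w p‖ := by linarith
      simp only [← Real.exp_nat_mul, ← Real.exp_sum]
      rw [show ∑ x, ((p.1 x + p.2 x : ℕ) : ℝ) * y x = e + Real.log ‖w p‖ from this,
        Real.exp_add, Real.exp_log (norm_pos_iff.2 hwp)]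
    simp only [a]
    rw [mono_mul, mono_ofReal, h2]
    conv_rhs => rw [hwphase p hp]
    push_cast
    ring
  have hGlim : ∀ i, ∑ p ∈ c.support, gterm m0 i p (c p) (w p) = 0 := by
    intro i
    refine tendsto_nhds_unique (Gi_div_tendsto c i hm0 hw) ?_
    rw [tendsto_zero_iff_norm_tendsto_zero]
    refine squeeze_zero (fun _ => norm_nonneg _) (fun k => ?_)
      (tendsto_one_div_add_atTop_nhds_zero_nat.mono_left hF)
    rw [norm_div, Complex.norm_real, Real.norm_of_nonneg (hMpos k).le,
      div_le_iff₀ (hMpos k)]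
    exact (hG k i).le
  refine hnd _ hface a ha (mem_Sing_of _ m0 (norm_ne_zero_iff.1 (by rw [hm0n]; norm_num)) a ?_)
  intro i
  have h1 : Gi (trunc c (face c v)) m0 i a = 0 := by
    rw [Gi_trunc c _ m0 i a (fun p => ((Real.exp e : ℝ) : ℂ) * gterm m0 i p (c p) (w p)),
      ← Finset.mul_sum, hGlim, mul_zero]
    · intro p hp hpΔ
      have hwp : w p ≠ 0 := by
        intro h
        exact absurd ((hiff p hp).1 hpΔ) (hT2 p hp h).ne
      rw [hmono p hp hwp, gterm_mul]
    · intro p hp hpΔ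
      have hwp : w p = 0 := by
        by_contra h
        exact hpΔ ((hiff p hp).2 (hT1 p hp h))
      simp [hwp, gterm]
  rw [Gi_eq] at h1
  exact (mul_eq_zero.1 h1).resolve_left (by simpa using ha i)

lemma continuous_Mz (c : MixedCoeff n) : Continuous (Mz c) := by
  unfold Mz
  exact continuous_const.add (continuous_finsetSum _ fun p _ => (continuous_mono p).norm)

lemma continuous_Gi (c : MixedCoeff n) (m : ℂ) (i : Fin n) : Continuous (Gi c m i) := by
  unfold Gi gterm
  have h1 : Continuous (starRingEnd ℂ) := Complex.continuous_conj
  have h2 := fun p => continuous_mono (n := n) p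
  fun_prop

lemma continuous_eval (c : MixedCoeff n) : Continuous (eval c) := by
  have : eval c = fun z => ∑ p ∈ c.support, c p * mono p z := funext (eval_eq c)
  rw [this]
  have h2 := fun p => continuous_mono (n := n) p
  fun_prop

lemma norm_eval_le (c : MixedCoeff n) (z : Fin n → ℂ) :
    ‖eval c z‖ ≤ (∑ p ∈ c.support, ‖c p‖) * Mz c z := by
  rw [eval_eq, Finset.sum_mul]
  refine (norm_sum_le _ _).trans (Finset.sum_le_sum fun p hp => ?_)
  rw [norm_mul]
  exact mul_le_mul_of_nonneg_left (mono_le_Mz c z p hp) (norm_nonneg _)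

lemma dense_torus : Dense {z : Fin n → ℂ | ∀ i, z i ≠ 0} := by
  have := dense_pi (Set.univ : Set (Fin n)) (s := fun _ => ({0}ᶜ : Set ℂ))
    (fun _ _ => dense_compl_singleton 0)
  convert this using 1
  ext z
  simp [Set.mem_pi]

lemma exists_torus (z : Fin n → ℂ) {P : (Fin n → ℂ) → Prop} (h : ∀ᶠ y in 𝓝 z, P y) :
    ∃ y, (∀ i, y i ≠ 0) ∧ P y := by
  have := mem_closure_iff_frequently.1 (dense_torus z)
  obtain ⟨y, hy1, hy2⟩ := (this.and_eventually h).exists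
  exact ⟨y, hy1, hy2⟩

lemma gterm_re (m : ℂ) (i : Fin n) (p) (a w : ℂ) :
    (gterm m i p a w).re = ((starRingEnd ℂ) m * (a * w)).re * suppPt p i := by
  simp [gterm, suppPt]
  ring

lemma ultra_exists {ι : Type*} [Finite ι] (F : Ultrafilter ℕ) (P : ι → ℕ → Prop)
    (h : ∀ᶠ k in (F : Filter ℕ), ∃ i, P i k) : ∃ i, ∀ᶠ k in (F : Filter ℕ), P i k := by
  by_contra hno
  push Not at hno
  have h1 : ∀ i, ∀ᶠ k in (F : Filter ℕ), ¬ P i k := fun i =>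
    Ultrafilter.frequently_iff_eventually.1 (by simpa using hno i)
  obtain ⟨k, hk1, i, hk2⟩ := ((eventually_all.2 h1).and h).exists
  exact hk1 i hk2

set_option maxHeartbeats 800000 in
lemma milnor_contra (c : MixedCoeff n) (ε : ℝ) (hε : 0 < ε) (z : ℕ → Fin n → ℂ)
    (hz : ∀ k i, z k i ≠ 0) (m : ℕ → ℂ) (hm : ∀ k, ‖m k‖ = 1) (l : ℕ → ℝ)
    (happ : ∀ k i, ‖Gi c (m k) i (z k) - ((l k * ‖z k i‖ ^ 2 : ℝ) : ℂ)‖ ≤ 1 / ((k : ℝ) + 1))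
    (hinf : Tendsto (fun k => ‖z k‖) atTop atTop) (v : ℂ)
    (hf : Tendsto (fun k => eval c (z k)) atTop (𝓝 v))
    (hbig : ∀ᶠ k in atTop, ∃ i, ε * Mz c (z k) ≤ ‖Gi c (m k) i (z k)‖) : False := by
  let F : Ultrafilter ℕ := hyperfilter ℕ
  have hF : (F : Filter ℕ) ≤ atTop := Nat.hyperfilter_le_atTop
  obtain ⟨m0, hm0⟩ := ultra_lim F m 1 (fun k => (hm k).le)
  obtain ⟨w, hw⟩ := exists_w c F z
  obtain ⟨i0, hi0⟩ := ultra_exists F _ (hbig.filter_mono hF)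
  have hMpos : ∀ k, 0 < Mz c (z k) := fun k => by linarith [one_le_Mz c (z k)]
  have hM1 : ∀ k, 1 / Mz c (z k) ≤ 1 := fun k =>
    (div_le_one (hMpos k)).2 (one_le_Mz c (z k))
  obtain ⟨w0, hw0⟩ := ultra_lim F (fun k => 1 / Mz c (z k)) 1 (fun k => by
    have := hMpos k
    rw [Real.norm_of_nonneg (by positivity)]
    exact hM1 k)
  set g : Fin n → ℂ := fun i => ∑ p ∈ c.support, gterm m0 i p (c p) (w p) with hg
  have hGlim : ∀ i, Tendsto (fun k => Gi c (m k) i (z k) / (Mz c (z k) : ℂ)) F (𝓝 (g i)) :=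
    fun i => Gi_div_tendsto c i hm0 hw
  let s : Fin n → ℕ → ℝ := fun i k => l k * ‖z k i‖ ^ 2 / Mz c (z k)
  have hsC : ∀ i, Tendsto (fun k => ((s i k : ℝ) : ℂ)) F (𝓝 (g i)) := by
    intro i
    have h0 : Tendsto (fun k => Gi c (m k) i (z k) / (Mz c (z k) : ℂ) - ((s i k : ℝ) : ℂ)) F
        (𝓝 0) := by
      rw [tendsto_zero_iff_norm_tendsto_zero]
      refine squeeze_zero (fun _ => norm_nonneg _) (fun k => ?_)
        (tendsto_one_div_add_atTop_nhds_zero_nat.mono_left hF)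
      have : Gi c (m k) i (z k) / (Mz c (z k) : ℂ) - ((s i k : ℝ) : ℂ) =
          (Gi c (m k) i (z k) - ((l k * ‖z k i‖ ^ 2 : ℝ) : ℂ)) / (Mz c (z k) : ℂ) := by
        simp only [s]; push_cast; ring
      rw [this, norm_div, Complex.norm_real, Real.norm_of_nonneg (hMpos k).le]
      exact (div_le_self (norm_nonneg _) (one_le_Mz c (z k))).trans (happ k i)
    have := (hGlim i).sub h0
    simpa using this
  let γ : Fin n → ℝ := fun i => (g i).re
  have hs : ∀ i, Tendsto (s i) F (𝓝 (γ i)) := fun i =>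
    (Complex.continuous_re.tendsto _).comp (hsC i)
  have hgγ : ∀ i, g i = (γ i : ℂ) := fun i =>
    tendsto_nhds_unique (hsC i) ((Complex.continuous_ofReal.tendsto _).comp (hs i))
  have hγ0 : γ i0 ≠ 0 := by
    intro h
    have h1 : ε ≤ ‖g i0‖ := by
      refine ge_of_tendsto (hGlim i0).norm ?_
      filter_upwards [hi0] with k hk
      rw [norm_div, Complex.norm_real, Real.norm_of_nonneg (hMpos k).le,
        le_div_iff₀ (hMpos k)]
      exact hk
    rw [hgγ, h] at h1
    simp at h1
    linarith
  have hzpos : ∀ k i, 0 < ‖z k i‖ := fun k i => norm_pos_iff.2 (hz k i)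
  let ρ : Fin n → ℕ → ℝ := fun i k => ‖z k i‖ ^ 2 / ‖z k i0‖ ^ 2
  have hρpos : ∀ i k, 0 < ρ i k := fun i k =>
    div_pos (pow_pos (hzpos k i) 2) (pow_pos (hzpos k i0) 2)
  have hρ : ∀ i, Tendsto (ρ i) F (𝓝 (γ i / γ i0)) := by
    intro i
    refine ((hs i).div (hs i0) hγ0).congr' ?_
    filter_upwards [(hs i0).eventually_ne hγ0] with k hk
    have hl : l k ≠ 0 := by
      intro h
      apply hk
      simp [s, h]
    have := hMpos k
    have := hzpos k i0
    simp only [s, ρ, Pi.div_apply]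
    field_simp
  have hz0 : Tendsto (fun k => ‖z k i0‖ ^ 2) F atTop := by
    have hsum : Tendsto (fun k => ∑ i, ρ i k) F (𝓝 (∑ i, γ i / γ i0)) :=
      tendsto_finsetSum _ fun i _ => hρ i
    generalize (∑ i, γ i / γ i0) = R at hsum
    have hRn : 0 ≤ R := ge_of_tendsto hsum (Eventually.of_forall fun k =>
      Finset.sum_nonneg fun i _ => (hρpos i k).le)
    have h2 : Tendsto (fun k => ‖z k‖ ^ 2 / (R + 1)) F atTop :=
      ((tendsto_pow_atTop two_ne_zero).comp (hinf.mono_left hF)).atTop_div_const (by linarith)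
    refine tendsto_atTop_mono' _ ?_ h2
    filter_upwards [hsum.eventually_lt_const (show R < R + 1 by linarith)] with k hk
    rw [div_le_iff₀ (by linarith)]
    have h3 : ∀ i, ‖z k i‖ ^ 2 ≤ ‖z k i0‖ ^ 2 * (R + 1) := by
      intro i
      have h4 : ρ i k ≤ ∑ i, ρ i k :=
        Finset.single_le_sum (f := fun i => ρ i k) (fun i _ => (hρpos i k).le)
          (Finset.mem_univ i)
      have h5 : ‖z k i‖ ^ 2 / ‖z k i0‖ ^ 2 ≤ R + 1 := h4.trans hk.le
      rw [div_le_iff₀ (pow_pos (hzpos k i0) 2)] at h5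
      linarith
    have h6 : ‖z k‖ ≤ Real.sqrt (‖z k i0‖ ^ 2 * (R + 1)) :=
      (pi_norm_le_iff_of_nonneg (Real.sqrt_nonneg _)).2 fun i => Real.le_sqrt_of_sq_le (h3 i)
    calc ‖z k‖ ^ 2 ≤ Real.sqrt (‖z k i0‖ ^ 2 * (R + 1)) ^ 2 :=
          pow_le_pow_left₀ (norm_nonneg _) h6 2
      _ = _ := Real.sq_sqrt (mul_nonneg (pow_nonneg (norm_nonneg _) 2) (add_nonneg hRn zero_le_one))
  -- key lemma
  let L : Option c.support ⊕ Option (Fin n) → ((Fin n → ℝ) × ℝ) →ₗ[ℝ] ℝ := fun o =>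
    match o with
    | Sum.inl none => lin 0 (-1)
    | Sum.inl (some p) => lin (suppPt p.1) (-1)
    | Sum.inr none => lin (Pi.single i0 (-2)) 0
    | Sum.inr (some i) => lin (Pi.single i 2 + Pi.single i0 (-2)) 0
  let B : Set (Option c.support ⊕ Option (Fin n)) := fun o =>
    match o with
    | Sum.inl none => w0 ≠ 0
    | Sum.inl (some p) => w p.1 ≠ 0
    | Sum.inr none => False
    | Sum.inr (some i) => γ i ≠ 0
  let r : Option c.support ⊕ Option (Fin n) → ℝ := fun o =>
    match o with
    | Sum.inl none => Real.log w0
    | Sum.inl (some p) => Real.log ‖w p.1‖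
    | Sum.inr none => 0
    | Sum.inr (some i) => Real.log (γ i / γ i0)
  have hnormpos : ∀ k p, 0 < ‖mono p (z k) / (Mz c (z k) : ℂ)‖ := by
    intro k p
    rw [norm_div]
    refine div_pos (mono_ne_zero p _ (hz k)) ?_
    rw [Complex.norm_real]
    exact norm_pos_iff.2 (hMpos k).ne'
  have hL1 : ∀ x, L (Sum.inr none) x = -2 * x.1 i0 := by
    intro x
    simp [L, lin_apply, Pi.single_apply, ite_mul]
  have hL2 : ∀ i x, L (Sum.inr (some i)) x = 2 * (x.1 i - x.1 i0) := by
    intro i x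
    simp only [L, lin_apply, Pi.single_apply, Pi.add_apply, add_mul, Finset.sum_add_distrib,
      ite_mul, zero_mul]
    simp
    ring
  have hL2' : ∀ i k, L (Sum.inr (some i)) (Xlog c (z k)) = Real.log (ρ i k) := by
    intro i k
    rw [hL2]
    simp only [ρ, Xlog]
    rw [Real.log_div (pow_pos (hzpos k i) 2).ne' (pow_pos (hzpos k i0) 2).ne', Real.log_pow,
      Real.log_pow]
    push_cast; ring
  obtain ⟨-, ⟨y, D⟩, -, hP0, hPneg⟩ := key (F : Filter ℕ) (fun k => Xlog c (z k)) L B r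
    (by
      rintro ((_ | p) | (_ | i)) hp
      · simp only [L, r, lin_Xlog_zero]
        exact tendsto_log_of_ne _ _ _ hp hw0
      · simp only [L, r, lin_Xlog_supp c _ (hz _)]
        exact tendsto_log_of_ne _ _ _ (norm_ne_zero_iff.2 hp) (hw p.1 p.2).norm
      · exact hp.elim
      · simp only [hL2']
        exact tendsto_log_of_ne _ _ _ (div_ne_zero hp hγ0) (hρ i))
    (by
      rintro ((_ | p) | (_ | i)) hp
      · simp only [L, lin_Xlog_zero]
        have h0 : w0 = 0 := not_not.1 hp
        rw [h0] at hw0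
        exact tendsto_log_of_eq _ _ (fun k => by have := hMpos k; positivity) hw0
      · have hp0 : w p.1 = 0 := not_not.1 hp
        simp only [L, lin_Xlog_supp c _ (hz _)]
        refine tendsto_log_of_eq _ _ (fun k => hnormpos k p.1) ?_
        have := (hw p.1 p.2).norm
        rwa [hp0, norm_zero] at this
      · have h1 := tendsto_neg_atTop_atBot.comp (Real.tendsto_log_atTop.comp hz0)
        refine h1.congr fun k => ?_
        rw [hL1]
        simp [Xlog, Real.log_pow]
      · have hp0 : γ i = 0 := not_not.1 hp
        simp only [hL2']
        refine tendsto_log_of_eq _ _ (hρpos i) ?_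
        have := hρ i
        rwa [hp0, zero_div] at this)
  have hy0 : 0 < y i0 := by
    have : L (Sum.inr none) (y, D) < 0 := hPneg (Sum.inr none) (fun h => h.elim)
    rw [hL1] at this
    dsimp only at this
    linarith
  have hyi : ∀ i, γ i ≠ 0 → y i = y i0 := by
    intro i hi
    have : L (Sum.inr (some i)) (y, D) = 0 := hP0 (Sum.inr (some i)) hi
    rw [hL2] at this
    dsimp only at this
    linarith
  have hT : ∀ p ∈ c.support, w p ≠ 0 → ∑ i, y i * suppPt p i = D := by
    intro p hp hwp
    have : lin (suppPt p) (-1) (y, D) = 0 := hP0 (Sum.inl (some ⟨p, hp⟩)) hwp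
    rw [lin_apply] at this
    simp only [mul_comm (y _)]
    dsimp only at this
    linarith
  have hD0 : w0 ≠ 0 → D = 0 := by
    intro h
    have : lin 0 (-1) (y, D) = 0 := hP0 (Sum.inl none) h
    rw [lin_apply] at this
    simpa using this
  -- first evaluation of the sum
  have hsum1 : ∑ i, y i * γ i ≠ 0 := by
    have h1 : ∑ i, y i * γ i = y i0 * (γ i0 * ∑ i, γ i / γ i0) := by
      rw [Finset.mul_sum, Finset.mul_sum]
      refine Finset.sum_congr rfl fun i _ => ?_
      rw [mul_div_cancel₀ _ hγ0]
      by_cases h : γ i = 0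
      · simp [h]
      · rw [hyi i h]
    have h2 : 0 < ∑ i, γ i / γ i0 := by
      refine Finset.sum_pos' (fun i _ => ?_) ⟨i0, Finset.mem_univ _, ?_⟩
      · exact ge_of_tendsto (hρ i) (Eventually.of_forall fun k => (hρpos i k).le)
      · rw [div_self hγ0]; norm_num
    rw [h1]
    exact mul_ne_zero hy0.ne' (mul_ne_zero hγ0 h2.ne')
  -- second evaluation
  have hsum2 : ∑ i, y i * γ i = D * ((starRingEnd ℂ) m0 * ∑ p ∈ c.support, c p * w p).re := by
    simp only [γ, hg, Complex.re_sum, gterm_re, Finset.mul_sum]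
    rw [Finset.sum_comm]
    refine Finset.sum_congr rfl fun p hp => ?_
    by_cases h : w p = 0
    · simp [h]
    · rw [← hT p hp h, Finset.sum_mul]
      exact Finset.sum_congr rfl fun i _ => by ring
  apply hsum1
  rw [hsum2]
  by_cases h : w0 = 0
  · have h1 : Tendsto (fun k => eval c (z k) * ((1 / Mz c (z k) : ℝ) : ℂ)) F
        (𝓝 (v * ((w0 : ℝ) : ℂ))) :=
      (hf.mono_left hF).mul ((Complex.continuous_ofReal.tendsto _).comp hw0)
    have h2 : Tendsto (fun k => ∑ p ∈ c.support, c p * (mono p (z k) / (Mz c (z k) : ℂ))) F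
        (𝓝 (∑ p ∈ c.support, c p * w p)) :=
      tendsto_finsetSum _ fun p hp => (hw p hp).const_mul _
    have h3 : ∑ p ∈ c.support, c p * w p = v * ((w0 : ℝ) : ℂ) := by
      refine tendsto_nhds_unique h2 (h1.congr fun k => ?_)
      rw [eval_eq, Finset.sum_mul]
      refine Finset.sum_congr rfl fun p _ => ?_
      push_cast
      ring
    rw [h3, h]
    simp
  · rw [hD0 h, zero_mul]

lemma bounded_Sing (c : MixedCoeff n) (C ε : ℝ) (hε : 0 < ε)
    (hC : ∀ z : Fin n → ℂ, (∀ i, z i ≠ 0) → ∀ m : ℂ, ‖m‖ = 1 →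
      C ≤ Mz c z → ∃ i, ε * Mz c z ≤ ‖Gi c m i z‖) (z : Fin n → ℂ) (hz : z ∈ Sing c) :
    ‖eval c z‖ ≤ (∑ p ∈ c.support, ‖c p‖) * C := by
  obtain ⟨m, hm, h⟩ := of_mem_Sing c z hz
  have hle : Mz c z ≤ C := by
    by_contra hlt
    push Not at hlt
    have h1 : ∀ᶠ y in 𝓝 z, C < Mz c y := (continuous_Mz c).continuousAt.eventually_const_lt hlt
    have h2 : ∀ᶠ y in 𝓝 z, ∀ i, ‖Gi c m i y‖ < ε * Mz c y := by
      rw [eventually_all]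
      intro i
      refine (continuous_Gi c m i).norm.continuousAt.eventually_lt
        (continuous_const.mul (continuous_Mz c)).continuousAt ?_
      rw [Gi_eq, h i, mul_zero, norm_zero]
      have := one_le_Mz c z
      positivity
    obtain ⟨y, hy, hy1, hy2⟩ := exists_torus z (h1.and h2)
    obtain ⟨i, hi⟩ := hC y hy m hm hy1.le
    exact absurd hi (not_le.2 (hy2 i))
  exact (norm_eval_le c z).trans
    (mul_le_mul_of_nonneg_left hle (Finset.sum_nonneg fun _ _ => norm_nonneg _))

lemma bounded_Sset (c : MixedCoeff n) (C ε : ℝ) (hε : 0 < ε)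
    (hC : ∀ z : Fin n → ℂ, (∀ i, z i ≠ 0) → ∀ m : ℂ, ‖m‖ = 1 →
      C ≤ Mz c z → ∃ i, ε * Mz c z ≤ ‖Gi c m i z‖) (v : ℂ) (hv : v ∈ Sset c) :
    ‖v‖ ≤ (∑ p ∈ c.support, ‖c p‖) * C := by
  by_contra hlt
  push Not at hlt
  obtain ⟨x, hx, hxinf, hxv⟩ := hv
  have hpert : ∀ k : ℕ, ∃ z : Fin n → ℂ, (∀ i, z i ≠ 0) ∧ ∃ (m : ℂ) (l : ℝ), ‖m‖ = 1 ∧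
      (∀ i, ‖Gi c m i z - ((l * ‖z i‖ ^ 2 : ℝ) : ℂ)‖ ≤ 1 / ((k : ℝ) + 1)) ∧
      ‖x k‖ - 1 ≤ ‖z‖ ∧ ‖eval c z - eval c (x k)‖ ≤ 1 / ((k : ℝ) + 1) := by
    intro k
    have hδ : (0 : ℝ) < 1 / ((k : ℝ) + 1) := by positivity
    obtain ⟨l, m, hm, hl⟩ := hx k
    have hmn : ‖m‖ ≠ 0 := norm_ne_zero_iff.2 hm
    set m' : ℂ := ((‖m‖⁻¹ : ℝ) : ℂ) * m with hm'
    set l' : ℝ := ‖m‖⁻¹ * l with hl'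
    have h1 : ‖m'‖ = 1 := by
      rw [hm', norm_mul, Complex.norm_real, norm_inv, norm_norm]
      exact inv_mul_cancel₀ hmn
    have h2 : ∀ i, Gi c m' i (x k) = ((l' * ‖x k i‖ ^ 2 : ℝ) : ℂ) := by
      intro i
      have h3 := hl i
      have h4 : (starRingEnd ℂ) (x k i) * x k i = ((‖x k i‖ ^ 2 : ℝ) : ℂ) := by
        rw [mul_comm, Complex.mul_conj, Complex.normSq_eq_norm_sq]
      rw [Gi_eq, Complex.ofReal_mul, ← h4, hm', hl', map_mul, Complex.conj_ofReal,
        Complex.ofReal_mul]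
      linear_combination (-(((‖m‖⁻¹ : ℝ) : ℂ) * (starRingEnd ℂ) (x k i))) * h3
    have e1 : ∀ᶠ z in 𝓝 (x k), ∀ i,
        ‖Gi c m' i z - ((l' * ‖z i‖ ^ 2 : ℝ) : ℂ)‖ < 1 / ((k : ℝ) + 1) := by
      rw [eventually_all]
      intro i
      have hc : Continuous fun z : Fin n → ℂ =>
          ‖Gi c m' i z - ((l' * ‖z i‖ ^ 2 : ℝ) : ℂ)‖ := by
        have h5 := continuous_Gi c m' i
        have h6 := Complex.continuous_ofReal
        fun_prop
      refine hc.continuousAt.eventually_lt_const ?_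
      dsimp only
      rw [h2, sub_self, norm_zero]
      exact hδ
    have e2 : ∀ᶠ z in 𝓝 (x k), ‖x k‖ - 1 < ‖z‖ :=
      continuous_norm.continuousAt.eventually_const_lt (by linarith)
    have e3 : ∀ᶠ z in 𝓝 (x k), ‖eval c z - eval c (x k)‖ < 1 / ((k : ℝ) + 1) := by
      have hc : Continuous fun z : Fin n → ℂ => ‖eval c z - eval c (x k)‖ :=
        ((continuous_eval c).sub continuous_const).norm
      refine hc.continuousAt.eventually_lt_const ?_
      dsimp only
      rw [sub_self, norm_zero]
      exact hδ
    obtain ⟨z, hz, h5, h6, h7⟩ := exists_torus (x k) (e1.and (e2.and e3))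
    exact ⟨z, hz, m', l', h1, fun i => (h5 i).le, h6.le, h7.le⟩
  choose z hz m l hm happ hnorm hev using hpert
  have hzinf : Tendsto (fun k => ‖z k‖) atTop atTop :=
    tendsto_atTop_mono hnorm (tendsto_atTop_add_const_right _ (-1) hxinf)
  have hzv : Tendsto (fun k => eval c (z k)) atTop (𝓝 v) := by
    have h0 : Tendsto (fun k => eval c (z k) - eval c (x k)) atTop (𝓝 0) := by
      rw [tendsto_zero_iff_norm_tendsto_zero]
      exact squeeze_zero (fun _ => norm_nonneg _) hev tendsto_one_div_add_atTop_nhds_zero_nat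
    have := h0.add hxv
    simpa using this
  refine milnor_contra c ε hε z hz m hm l happ hzinf v hzv ?_
  filter_upwards [hzv.norm.eventually_const_lt hlt] with k hk
  refine hC (z k) (hz k) (m k) (hm k) ?_
  have h1 := hk.trans_le (norm_eval_le c (z k))
  exact (lt_of_mul_lt_mul_left h1 (Finset.sum_nonneg fun _ _ => norm_nonneg _)).le
end Mixed

/-- Theorem 3.6(2): if `f` depends effectively on all variables, `f(0) = 0`
and `f` is Newton strongly non-degenerate, then `f(Sing f)` and `S(f)` are bounded. -/
theorem bounded_of_strongly_nondeg {n : ℕ} (c : MixedCoeff n)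
    (heff : Mixed.EffectiveAll c) (h0 : Mixed.eval c 0 = 0)
    (hnd : Mixed.NewtonStronglyNonDeg c) :
    Bornology.IsBounded (Mixed.eval c '' Mixed.Sing c) ∧
    Bornology.IsBounded (Mixed.Sset c) := by

  obtain ⟨C, ε, hε, hC⟩ := Mixed.lojas c hnd
  constructor
  · rw [isBounded_iff_forall_norm_le]
    refine ⟨(∑ p ∈ c.support, ‖c p‖) * C, ?_⟩
    rintro _ ⟨z, hz, rfl⟩
    exact Mixed.bounded_Sing c C ε hε hC z hz
  · rw [isBounded_iff_forall_norm_le]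
    exact ⟨(∑ p ∈ c.support, ‖c p‖) * C, fun v hv => Mixed.bounded_Sset c C ε hε hC v hv⟩
end
end

section
/- Fix n ≥ 1, m ≥ 1 and pairwise distinct pairs (ν₁,μ₁),…,(ν_m,μ_m) ∈ ℕⁿ × ℕⁿ. For c ∈ ℂᵐ let f_c(z) := Σ_{j=1}^m c_j z^{ν_j} z̄^{μ_j}, and let Γ ⊂ ℝⁿ be the union of the faces not containing 0 of the convex hull of {0} ∪ {ν_j + μ_j : j = 1,…,m}. Then the set U_Γ := {c ∈ ℂᵐ | Γ⁺(f_c) = Γ (as subsets of ℝⁿ) and f_c is Newton non-degenerate} is open in ℂᵐ and dense in ℂᵐ. -/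
open Complex Filter Finset

noncomputable section

namespace NND

open Topology

variable {n m : ℕ}

/-- The degeneracy condition on the vector of monomial values. -/
def Deg (P Q : Fin m → Fin n → ℝ) (S : Finset (Fin m)) (b : Fin m → ℂ) : Prop :=
  ∑ j ∈ S, b j = 0 ∧ ∀ i, ∑ j ∈ S, (b j).re * P j i = 0 ∧ ∑ j ∈ S, (b j).im * Q j i = 0

/-- The torus action in logarithmic coordinates. -/
def tw (P Q : Fin m → Fin n → ℝ) (x θ : Fin n → ℝ) (φ : ℝ) (c : Fin m → ℂ) : Fin m → ℂ :=
  fun j => c j * Complex.exp (((P j ⬝ᵥ x : ℝ) : ℂ) + ((Q j ⬝ᵥ θ + φ : ℝ) : ℂ) * Complex.I)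

def Bad (P Q : Fin m → Fin n → ℝ) (S : Finset (Fin m)) (c : Fin m → ℂ) : Prop :=
  ∃ (x θ : Fin n → ℝ) (φ : ℝ), (∀ i, θ i ∈ Set.Icc (-Real.pi) Real.pi) ∧
    φ ∈ Set.Icc (-Real.pi) Real.pi ∧ Deg P Q S (tw P Q x θ φ c)

def Adm (P : Fin m → Fin n → ℝ) (S : Finset (Fin m)) : Prop :=
  S.Nonempty ∧ ∃ a : Fin n → ℝ, (∀ j, P j ⬝ᵥ a ≤ 1) ∧ ∀ j, j ∈ S ↔ P j ⬝ᵥ a = 1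

lemma Deg.smul {P Q : Fin m → Fin n → ℝ} {S : Finset (Fin m)} {b b' : Fin m → ℂ} (r : ℝ)
    (h : Deg P Q S b) (hb : ∀ j ∈ S, b' j = r * b j) : Deg P Q S b' := by
  obtain ⟨h1, h2⟩ := h
  refine ⟨?_, fun i => ⟨?_, ?_⟩⟩
  · rw [Finset.sum_congr rfl hb, ← Finset.mul_sum, h1, mul_zero]
  · rw [Finset.sum_congr rfl (g := fun j => r * ((b j).re * P j i)), ← Finset.mul_sum, (h2 i).1,
      mul_zero]
    intro j hj
    rw [hb j hj, Complex.re_ofReal_mul, mul_assoc]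
  · rw [Finset.sum_congr rfl (g := fun j => r * ((b j).im * Q j i)), ← Finset.mul_sum, (h2 i).2,
      mul_zero]
    intro j hj
    rw [hb j hj, Complex.im_ofReal_mul, mul_assoc]

lemma Deg.limit {P Q : Fin m → Fin n → ℝ} {S : Finset (Fin m)} {ι : Type*} {u : Filter ι} [u.NeBot]
    {b : ι → Fin m → ℂ} {B : Fin m → ℂ}
    (h : ∀ᶠ k in u, Deg P Q S (b k)) (hb : ∀ j ∈ S, Tendsto (fun k => b k j) u (𝓝 (B j))) :
    Deg P Q S B := by
  refine ⟨?_, fun i => ⟨?_, ?_⟩⟩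
  · have := tendsto_finsetSum S hb
    refine tendsto_nhds_unique this (tendsto_const_nhds.congr' ?_)
    filter_upwards [h] with k hk using hk.1.symm
  · have := tendsto_finsetSum S (fun j hj =>
      (((Complex.continuous_re.tendsto _).comp (hb j hj)).mul_const (P j i)))
    refine tendsto_nhds_unique this (tendsto_const_nhds.congr' ?_)
    filter_upwards [h] with k hk using (hk.2 i).1.symm
  · have := tendsto_finsetSum S (fun j hj =>
      (((Complex.continuous_im.tendsto _).comp (hb j hj)).mul_const (Q j i)))
    refine tendsto_nhds_unique this (tendsto_const_nhds.congr' ?_)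
    filter_upwards [h] with k hk using (hk.2 i).2.symm

lemma Deg.mono {P Q : Fin m → Fin n → ℝ} {S S' : Finset (Fin m)} {b : Fin m → ℂ} (hS : S' ⊆ S)
    (h : Deg P Q S b) (hb : ∀ j ∈ S, j ∉ S' → b j = 0) : Deg P Q S' b := by
  refine ⟨?_, fun i => ⟨?_, ?_⟩⟩
  · rw [← h.1]
    exact Finset.sum_subset hS hb
  · rw [← (h.2 i).1]
    exact Finset.sum_subset hS (fun j h1 h2 => by simp [hb j h1 h2])
  · rw [← (h.2 i).2]
    exact Finset.sum_subset hS (fun j h1 h2 => by simp [hb j h1 h2])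

/-- Subfaces of admissible faces are admissible. -/
lemma Adm.sub {P : Fin m → Fin n → ℝ} {S S' : Finset (Fin m)} (hS : Adm P S) (hS' : S' ⊆ S)
    (j0 : Fin m) (hj0 : j0 ∈ S') (a' : Fin n → ℝ) (h0 : ∀ j ∈ S', P j ⬝ᵥ a' = P j0 ⬝ᵥ a')
    (h1 : ∀ j ∈ S, j ∉ S' → P j ⬝ᵥ a' < P j0 ⬝ᵥ a') : Adm P S' := by
  obtain ⟨_, a, ha, haS⟩ := hS
  have key : ∀ᶠ ε in 𝓝[>] (0:ℝ), 0 < 1 + ε * (P j0 ⬝ᵥ a') ∧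
      ∀ j, j ∉ S → P j ⬝ᵥ a + ε * (P j ⬝ᵥ a') < 1 + ε * (P j0 ⬝ᵥ a') := by
    apply Filter.Eventually.filter_mono nhdsWithin_le_nhds
    refine Filter.Eventually.and ?_ ?_
    · have : ContinuousAt (fun ε : ℝ => 1 + ε * (P j0 ⬝ᵥ a')) 0 := by fun_prop
      exact this.eventually (lt_mem_nhds (by simp))
    · rw [Filter.eventually_all]
      intro j
      by_cases hj : j ∈ S
      · simp [hj]
      · have hlt : P j ⬝ᵥ a < 1 := lt_of_le_of_ne (ha j) (fun h => hj ((haS j).2 h))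
        have : ContinuousAt (fun ε : ℝ => 1 + ε * (P j0 ⬝ᵥ a') - (P j ⬝ᵥ a + ε * (P j ⬝ᵥ a'))) 0 := by
          fun_prop
        have := this.eventually (lt_mem_nhds (a := 0) (by simp; linarith))
        filter_upwards [this] with ε hε _
        linarith
  obtain ⟨ε, ⟨hp, hε⟩, hpos⟩ := (key.and self_mem_nhdsWithin).exists
  replace hpos : 0 < ε := hpos
  set D := 1 + ε * (P j0 ⬝ᵥ a') with hD
  have hval : ∀ j, P j ⬝ᵥ (D⁻¹ • (a + ε • a')) = (P j ⬝ᵥ a + ε * (P j ⬝ᵥ a')) / D := by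
    intro j
    simp only [dotProduct_smul, dotProduct_add, smul_eq_mul]
    ring
  have hlt : ∀ j, j ∉ S' → P j ⬝ᵥ (D⁻¹ • (a + ε • a')) < 1 := by
    intro j hj
    rw [hval, div_lt_one hp]
    by_cases hjS : j ∈ S
    · rw [(haS j).1 hjS]
      have := mul_lt_mul_of_pos_left (h1 j hjS hj) hpos
      linarith
    · exact hε j hjS
  have heq : ∀ j ∈ S', P j ⬝ᵥ (D⁻¹ • (a + ε • a')) = 1 := by
    intro j hj
    rw [hval, (haS j).1 (hS' hj), h0 j hj, ← hD, div_self hp.ne']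
  refine ⟨⟨j0, hj0⟩, D⁻¹ • (a + ε • a'), fun j => ?_, fun j => ⟨heq j, fun h => ?_⟩⟩
  · by_cases hj : j ∈ S'
    · exact (heq j hj).le
    · exact (hlt j hj).le
  · by_contra hj
    exact (hlt j hj).ne h

lemma exists_pinv {E F : Type*} [AddCommGroup E] [Module ℝ E] [AddCommGroup F] [Module ℝ F]
    (T : E →ₗ[ℝ] F) : ∃ R : F →ₗ[ℝ] E, ∀ x, T (R (T x)) = T x := by
  obtain ⟨g, hg⟩ := LinearMap.exists_rightInverse_of_surjective T.rangeRestrict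
    T.range_rangeRestrict
  obtain ⟨R, hR⟩ := LinearMap.exists_extend g
  refine ⟨R, fun x => ?_⟩
  have h1 : R (T x) = g (T.rangeRestrict x) := by
    rw [← hR]; rfl
  rw [h1]
  have := LinearMap.congr_fun hg (T.rangeRestrict x)
  simpa using congrArg Subtype.val this

lemma ultra_conv {ι : Type*} (u : Ultrafilter ι) (f : ι → ℝ) (a b : ℝ)
    (h : ∀ᶠ k in u, f k ∈ Set.Icc a b) : ∃ y ∈ Set.Icc a b, Tendsto f u (𝓝 y) := by
  obtain ⟨y, hy, hlim⟩ := (isCompact_Icc (a := a) (b := b)).ultrafilter_le_nhds' (u.map f) h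
  exact ⟨y, hy, hlim⟩

/-- Main closedness lemma. -/
lemma closure_bad {P Q : Fin m → Fin n → ℝ} {S : Finset (Fin m)} (hS : Adm P S) {c : Fin m → ℂ}
    (hc : c ∈ closure {c | Bad P Q S c}) : ∃ S', Adm P S' ∧ Bad P Q S' c := by
  classical
  obtain ⟨u, hu, huc⟩ := mem_closure_iff_ultrafilter.1 hc
  have hch : ∀ c : Fin m → ℂ, ∃ (x θ : Fin n → ℝ) (φ : ℝ), Bad P Q S c →
      (∀ i, θ i ∈ Set.Icc (-Real.pi) Real.pi) ∧
      φ ∈ Set.Icc (-Real.pi) Real.pi ∧ Deg P Q S (tw P Q x θ φ c) := by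
    intro c
    by_cases h : Bad P Q S c
    · obtain ⟨x, θ, φ, h⟩ := h
      exact ⟨x, θ, φ, fun _ => h⟩
    · exact ⟨0, 0, 0, fun h' => absurd h' h⟩
  choose x θ φ hx using hch
  have hev : ∀ᶠ k in (u : Filter (Fin m → ℂ)), Bad P Q S k := hu
  -- limits of the angles
  have hθ : ∀ i, ∃ y ∈ Set.Icc (-Real.pi) Real.pi, Tendsto (fun k => θ k i) u (𝓝 y) := fun i =>
    ultra_conv u _ _ _ (hev.mono fun k hk => (hx k hk).1 i)
  choose Θ hΘ hΘt using hθ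
  obtain ⟨Φ, hΦ, hΦt⟩ := ultra_conv u φ _ _ (hev.mono fun k hk => (hx k hk).2.1)
  -- the dominant index
  have hmax : ∀ k, ∃ j ∈ S, ∀ j' ∈ S, P j' ⬝ᵥ x k ≤ P j ⬝ᵥ x k := fun k =>
    Finset.exists_max_image S _ hS.1
  have hmax' : ∃ j ∈ S, ∀ᶠ k in (u : Filter (Fin m → ℂ)), ∀ j' ∈ S, P j' ⬝ᵥ x k ≤ P j ⬝ᵥ x k := by
    by_contra hcon
    push Not at hcon
    have h2 : ∀ᶠ k in (u : Filter (Fin m → ℂ)), ∀ j ∈ S, ¬ ∀ j' ∈ S, P j' ⬝ᵥ x k ≤ P j ⬝ᵥ x k := by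
      rw [Filter.eventually_all_finset]
      intro j hj
      have := hcon j hj
      exact this.mono (fun k hk h => by obtain ⟨j', h1, h2⟩ := hk; exact absurd (h j' h1) (not_le.2 h2))
    obtain ⟨k, hk⟩ := h2.exists
    obtain ⟨j, hj, hjj⟩ := hmax k
    exact hk j hj hjj
  obtain ⟨j0, hj0, hdom⟩ := hmax'
  set S' : Finset (Fin m) := S.filter (fun j => ∃ M : ℝ, ∀ᶠ k in (u : Filter (Fin m → ℂ)),
    P j0 ⬝ᵥ x k - P j ⬝ᵥ x k ≤ M) with hS'def
  have hS'S : S' ⊆ S := Finset.filter_subset _ _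
  have hj0' : j0 ∈ S' := by
    simp only [hS'def, Finset.mem_filter]
    exact ⟨hj0, 0, by simp⟩
  let T : (Fin n → ℝ) →ₗ[ℝ] (Fin m → ℝ) :=
    { toFun := fun y j => if j ∈ S' then P j ⬝ᵥ y - P j0 ⬝ᵥ y else 0
      map_add' := by
        intro y z; ext j
        by_cases h : j ∈ S' <;> simp [h, dotProduct_add]
        ring
      map_smul' := by
        intro r y; ext j
        by_cases h : j ∈ S' <;> simp [h, dotProduct_smul]
        ring }
  obtain ⟨R, hR⟩ := exists_pinv T
  have hTlim : ∀ j, ∃ y, Tendsto (fun k => T (x k) j) u (𝓝 y) := by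
    intro j
    by_cases hj : j ∈ S'
    · obtain ⟨hjS, M, hM⟩ := Finset.mem_filter.1 hj
      obtain ⟨y, -, hy⟩ := ultra_conv u (fun k => T (x k) j) (-M) 0 (by
        filter_upwards [hM, hdom] with k h1 h2
        have := h2 j hjS
        simp only [T, LinearMap.coe_mk, AddHom.coe_mk, hj, if_true, Set.mem_Icc]
        constructor <;> linarith)
      exact ⟨y, hy⟩
    · exact ⟨0, by simp [T, hj]⟩
  choose τ hτ using hTlim
  have hτ' : Tendsto (fun k => T (x k)) u (𝓝 τ) := tendsto_pi_nhds.2 hτ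
  set y : (Fin m → ℂ) → Fin n → ℝ := fun k => R (T (x k)) with hy
  have hyt : Tendsto y u (𝓝 (R τ)) :=
    ((LinearMap.continuous_of_finiteDimensional R).tendsto τ).comp hτ'
  have hyd : ∀ j, Tendsto (fun k => P j ⬝ᵥ y k) u (𝓝 (P j ⬝ᵥ R τ)) := by
    intro j
    have : Continuous (fun z : Fin n → ℝ => P j ⬝ᵥ z) := by
      unfold dotProduct; fun_prop
    exact (this.tendsto _).comp hyt
  have hQd : ∀ j, Tendsto (fun k => Q j ⬝ᵥ θ k + φ k) u (𝓝 (Q j ⬝ᵥ Θ + Φ)) := by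
    intro j
    have : Continuous (fun z : Fin n → ℝ => Q j ⬝ᵥ z) := by
      unfold dotProduct; fun_prop
    exact ((this.tendsto _).comp (tendsto_pi_nhds.2 hΘt)).add hΦt
  have ha0 : ∀ k, ∀ j ∈ S', P j ⬝ᵥ (x k - y k) = P j0 ⬝ᵥ (x k - y k) := by
    intro k j hj
    have := congrFun (hR (x k)) j
    simp only [T, LinearMap.coe_mk, AddHom.coe_mk, hj, if_true] at this
    simp only [dotProduct_sub]
    have h3 : y k = R (T (x k)) := rfl
    rw [h3]
    simp only [T, LinearMap.coe_mk, AddHom.coe_mk]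
    linarith
  have ha1 : ∀ j ∈ S, j ∉ S' →
      Tendsto (fun k => P j ⬝ᵥ (x k - y k) - P j0 ⬝ᵥ (x k - y k)) u atBot := by
    intro j hj hj'
    have h1 : Tendsto (fun k => P j ⬝ᵥ x k - P j0 ⬝ᵥ x k) u atBot := by
      rw [Filter.tendsto_atBot]
      intro b
      have : ¬ ∃ M : ℝ, ∀ᶠ k in (u : Filter (Fin m → ℂ)), P j0 ⬝ᵥ x k - P j ⬝ᵥ x k ≤ M := fun h =>
        hj' (Finset.mem_filter.2 ⟨hj, h⟩)
      push Not at this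
      have := this (-b)
      filter_upwards [this] with k hk
      linarith
    have h2 := h1.atBot_add ((hyd j0).sub (hyd j))
    refine h2.congr fun k => ?_
    simp only [dotProduct_sub]
    ring
  refine ⟨S', ?_, R τ, Θ, Φ, hΘ, hΦ, ?_⟩
  · have : ∀ᶠ k in (u : Filter (Fin m → ℂ)), ∀ j ∈ S, j ∉ S' →
        P j ⬝ᵥ (x k - y k) < P j0 ⬝ᵥ (x k - y k) := by
      rw [Filter.eventually_all_finset]
      intro j hj
      by_cases hj' : j ∈ S'
      · simp [hj']
      · filter_upwards [(ha1 j hj hj').eventually (Filter.eventually_lt_atBot 0)] with k hk _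
        linarith
    obtain ⟨k, hk⟩ := this.exists
    exact hS.sub hS'S j0 hj0' (x k - y k) (ha0 k) hk
  · set B : Fin m → ℂ := fun j => if j ∈ S' then tw P Q (R τ) Θ Φ c j else 0 with hB
    have hDB : Deg P Q S B := by
      refine Deg.limit (u := (u : Filter (Fin m → ℂ)))
        (b := fun k j => ((Real.exp (-(P j0 ⬝ᵥ (x k - y k))) : ℝ) : ℂ) * tw P Q (x k) (θ k) (φ k) k j)
        ?_ ?_
      · filter_upwards [hev] with k hk
        exact (hx k hk).2.2.smul _ (fun j _ => rfl)
      · intro j hj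
        have hform : ∀ k : Fin m → ℂ, ((Real.exp (-(P j0 ⬝ᵥ (x k - y k))) : ℝ) : ℂ) *
            tw P Q (x k) (θ k) (φ k) k j =
            ((Real.exp (P j ⬝ᵥ (x k - y k) - P j0 ⬝ᵥ (x k - y k)) : ℝ) : ℂ) *
            tw P Q (y k) (θ k) (φ k) k j := by
          intro k
          simp only [tw, Complex.ofReal_exp]
          rw [mul_left_comm, mul_left_comm (Complex.exp _) (k j), ← Complex.exp_add,
            ← Complex.exp_add]
          congr 2
          simp only [dotProduct_sub]
          push_cast
          ring
        have htw : Tendsto (fun k : Fin m → ℂ => tw P Q (y k) (θ k) (φ k) k j) u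
            (𝓝 (tw P Q (R τ) Θ Φ c j)) := by
          unfold tw
          refine Tendsto.mul ?_ ?_
          · exact ((continuous_apply j).tendsto c).mono_left huc
          · refine (Complex.continuous_exp.tendsto _).comp ?_
            refine Tendsto.add ?_ (Tendsto.mul_const _ ?_)
            · exact (Complex.continuous_ofReal.tendsto _).comp (hyd j)
            · exact (Complex.continuous_ofReal.tendsto _).comp (hQd j)
        refine Tendsto.congr (fun k => (hform k).symm) ?_
        by_cases hj' : j ∈ S'
        · simp only [hB, hj', if_true]
          refine htw.congr fun k => ?_
          rw [ha0 k j hj', sub_self]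
          simp
        · simp only [hB, hj', if_false]
          have h0 : Tendsto (fun k => ((Real.exp (P j ⬝ᵥ (x k - y k) - P j0 ⬝ᵥ (x k - y k)) : ℝ) : ℂ))
              u (𝓝 ((0:ℝ):ℂ)) :=
            (Complex.continuous_ofReal.tendsto _).comp
              (Real.tendsto_exp_atBot.comp (ha1 j hj hj'))
          simpa using h0.mul htw
    have := hDB.mono hS'S (fun j _ h => by simp [hB, h])
    refine this.smul 1 (fun j hj => by simp [hB, hj])

lemma isClosed_bad (P Q : Fin m → Fin n → ℝ) : IsClosed {c | ∃ S, Adm P S ∧ Bad P Q S c} := by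
  have h : {c | ∃ S, Adm P S ∧ Bad P Q S c} = ⋃ S ∈ {S | Adm P S}, {c | Bad P Q S c} := by
    ext c; simp
  rw [← closure_subset_iff_isClosed]
  nth_rewrite 1 [h]
  rw [(Set.toFinite {S | Adm P S}).closure_biUnion]
  intro c hc
  simp only [Set.mem_iUnion] at hc
  obtain ⟨S, hS, hc⟩ := hc
  exact closure_bad hS hc

/-- Dimension estimate. -/
lemma dimH_bad (P Q : Fin m → Fin n → ℝ) {S : Finset (Fin m)} (hS : Adm P S) :
    dimH {c | Bad P Q S c} < Module.finrank ℝ (Fin m → ℂ) := by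
  classical
  obtain ⟨hne, a, ha, haS⟩ := hS
  let A : (Fin n → ℝ) →ₗ[ℝ] EuclideanSpace ℝ (Fin m) :=
    { toFun := fun y => WithLp.toLp 2 (fun j => if j ∈ S then P j ⬝ᵥ y else 0)
      map_add' := by
        intro y z; ext j
        by_cases h : j ∈ S <;> simp [h, dotProduct_add]
      map_smul' := by
        intro r y; ext j
        by_cases h : j ∈ S <;> simp [h, dotProduct_smul] }
  let B : ((Fin n → ℝ) × ℝ) →ₗ[ℝ] EuclideanSpace ℝ (Fin m) :=
    { toFun := fun y => WithLp.toLp 2 (fun j => if j ∈ S then Q j ⬝ᵥ y.1 + y.2 else 0)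
      map_add' := by
        intro y z; ext j
        by_cases h : j ∈ S <;> simp [h, dotProduct_add]
        ring
      map_smul' := by
        intro r y; ext j
        by_cases h : j ∈ S <;> simp [h, dotProduct_smul]
        ring }
  let one : EuclideanSpace ℝ (Fin m) := A a
  let R1 := LinearMap.range A
  let R2 := LinearMap.range B
  let R0 := R1 ⊓ (ℝ ∙ one)ᗮ
  have hone : ∀ j, one j = if j ∈ S then 1 else 0 := by
    intro j
    by_cases h : j ∈ S
    · simp [one, A, h, (haS j).1 h]
    · simp [one, A, h]
  have hone_ne : one ≠ 0 := by
    obtain ⟨j, hj⟩ := hne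
    intro h
    have h1 := hone j
    rw [h] at h1
    simp [hj] at h1
  have hR0 : Module.finrank ℝ R0 < Module.finrank ℝ R1 := by
    apply Submodule.finrank_lt_finrank_of_lt
    refine lt_of_le_of_ne inf_le_left ?_
    intro h
    have h1 : one ∈ R0 := h ▸ ⟨a, rfl⟩
    have h2 := Submodule.mem_orthogonal_singleton_iff_inner_right.1 h1.2
    exact hone_ne (inner_self_eq_zero.1 h2)
  let F : (R0 × R2) × (R1ᗮ × R2ᗮ) → (Fin m → ℂ) := fun w j =>
    (((w.2.1 : EuclideanSpace ℝ (Fin m)) j : ℂ) + ((w.2.2 : EuclideanSpace ℝ (Fin m)) j : ℂ) * Complex.I) *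
    Complex.exp (-(((w.1.1 : EuclideanSpace ℝ (Fin m)) j : ℂ) +
      ((w.1.2 : EuclideanSpace ℝ (Fin m)) j : ℂ) * Complex.I))
  have hF : ContDiff ℝ 1 F := by
    rw [contDiff_pi]
    intro j
    have e : ∀ (V : Submodule ℝ (EuclideanSpace ℝ (Fin m))),
        ContDiff ℝ 1 (fun v : V => (((v : EuclideanSpace ℝ (Fin m)) j : ℝ) : ℂ)) := by
      intro V
      exact (Complex.ofRealCLM.comp ((EuclideanSpace.proj j).comp V.subtypeL)).contDiff
    have e1 := (e R0).comp (contDiff_fst.comp (contDiff_fst (E := R0 × R2) (F := R1ᗮ × R2ᗮ)))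
    have e2 := (e R2).comp (contDiff_snd.comp (contDiff_fst (E := R0 × R2) (F := R1ᗮ × R2ᗮ)))
    have e3 := (e R1ᗮ).comp (contDiff_fst.comp (contDiff_snd (E := R0 × R2) (F := R1ᗮ × R2ᗮ)))
    have e4 := (e R2ᗮ).comp (contDiff_snd.comp (contDiff_snd (E := R0 × R2) (F := R1ᗮ × R2ᗮ)))
    exact (e3.add (e4.mul contDiff_const)).mul ((e1.add (e2.mul contDiff_const)).neg.cexp)
  have hsub : {c | Bad P Q S c} ⊆ Set.range F := by
    rintro c ⟨x, θ, φ, -, -, hD⟩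
    set t : ℝ := (∑ j ∈ S, P j ⬝ᵥ x) / S.card with ht
    have hcard : (S.card : ℝ) ≠ 0 := by exact_mod_cast hne.card_pos.ne'
    let s : EuclideanSpace ℝ (Fin m) := A (x - t • a)
    have hs : ∀ j, s j = if j ∈ S then P j ⬝ᵥ x - t else 0 := by
      intro j
      by_cases h : j ∈ S
      · simp [s, A, h, (haS j).1 h, dotProduct_sub]
      · simp [s, A, h]
    let T : EuclideanSpace ℝ (Fin m) := B (θ, φ)
    have hT : ∀ j, T j = if j ∈ S then Q j ⬝ᵥ θ + φ else 0 := fun j => rfl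
    have hsR : s ∈ R0 := by
      refine ⟨⟨_, rfl⟩, ?_⟩
      rw [SetLike.mem_coe, Submodule.mem_orthogonal_singleton_iff_inner_right]
      simp only [PiLp.inner_apply, hone, hs]
      simp only [RCLike.inner_apply, conj_trivial]
      simp
      rw [ht]; field_simp; simp
    let b : Fin m → ℂ := fun j => c j * Complex.exp ((s j : ℂ) + (T j : ℂ) * Complex.I)
    have hb : Deg P Q S b := by
      refine hD.smul (Real.exp (-t)) (fun j hj => ?_)
      simp only [b, tw, hs, hT, hj, if_true, Complex.ofReal_exp]
      rw [mul_left_comm, ← Complex.exp_add]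
      congr 2
      push_cast
      ring
    have hu : (WithLp.toLp 2 (fun j => (b j).re) : EuclideanSpace ℝ (Fin m)) ∈ R1ᗮ := by
      rw [Submodule.mem_orthogonal]
      rintro _ ⟨y, rfl⟩
      have : ∑ i, y i * ∑ j ∈ S, (b j).re * P j i = 0 := by
        simp [(hb.2 _).1]
      rw [← this]
      simp only [A, PiLp.inner_apply, RCLike.inner_apply, conj_trivial, LinearMap.coe_mk, AddHom.coe_mk,
        mul_ite, mul_zero, Finset.sum_ite_mem, Finset.univ_inter, dotProduct, Finset.mul_sum]
      rw [Finset.sum_comm]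
      refine Finset.sum_congr rfl fun i _ => Finset.sum_congr rfl fun j _ => by ring
    have hv : (WithLp.toLp 2 (fun j => (b j).im) : EuclideanSpace ℝ (Fin m)) ∈ R2ᗮ := by
      rw [Submodule.mem_orthogonal]
      rintro _ ⟨y, rfl⟩
      have h0 : ∑ j ∈ S, (b j).im = 0 := by
        have := congrArg Complex.im hb.1
        simpa using this
      have : ∑ i, y.1 i * ∑ j ∈ S, (b j).im * Q j i + y.2 * ∑ j ∈ S, (b j).im = 0 := by
        simp [(hb.2 _).2, h0]
      rw [← this]
      simp only [B, PiLp.inner_apply, RCLike.inner_apply, conj_trivial, LinearMap.coe_mk, AddHom.coe_mk,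
        mul_ite, mul_zero, Finset.sum_ite_mem, Finset.univ_inter, dotProduct, Finset.mul_sum, mul_add,
        Finset.sum_add_distrib]
      rw [Finset.sum_comm]
      congr 1
      · refine Finset.sum_congr rfl fun i _ => Finset.sum_congr rfl fun j _ => by ring
      · refine Finset.sum_congr rfl fun i _ => by ring
    refine ⟨((⟨s, hsR⟩, ⟨T, ⟨_, rfl⟩⟩), (⟨_, hu⟩, ⟨_, hv⟩)), ?_⟩
    ext j
    simp only [F]
    rw [Complex.re_add_im]
    simp only [b]
    rw [mul_assoc, ← Complex.exp_add, add_neg_cancel, Complex.exp_zero, mul_one]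
  refine lt_of_le_of_lt ((dimH_mono hsub).trans hF.dimH_range_le) ?_
  have h1 := Submodule.finrank_add_finrank_orthogonal R1
  have h2 := Submodule.finrank_add_finrank_orthogonal R2
  have h3 : Module.finrank ℝ (Fin m → ℂ) = m + m := by
    rw [Module.finrank_pi_fintype]
    simp [Complex.finrank_real_complex, mul_two]
  rw [finrank_euclideanSpace_fin] at h1 h2
  rw [h3, Module.finrank_prod, Module.finrank_prod, Module.finrank_prod]
  norm_cast
  omega

lemma dense_good (hm : 1 ≤ m) (P Q : Fin m → Fin n → ℝ) :
    Dense {c | ∃ S, Adm P S ∧ Bad P Q S c}ᶜ := by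
  classical
  have h : {c | ∃ S, Adm P S ∧ Bad P Q S c} =
      ⋃ S ∈ (Finset.univ.filter (fun S => Adm P S) : Finset (Finset (Fin m))),
        {c | Bad P Q S c} := by
    ext c; simp
  rw [h]
  apply dense_compl_of_dimH_lt_finrank
  have h2 := dimH_bUnion (Finset.countable_toSet
    (Finset.univ.filter (fun S => Adm P S) : Finset (Finset (Fin m)))) (fun S => {c | Bad P Q S c})
  simp only [Finset.mem_coe] at h2
  rw [h2, ← Finset.sup_eq_iSup, Finset.sup_lt_iff]
  · intro S hS
    exact dimH_bad P Q (Finset.mem_filter.1 hS).2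
  · have h3 : Module.finrank ℝ (Fin m → ℂ) = m * 2 := by
      rw [Module.finrank_pi_fintype]
      simp [Complex.finrank_real_complex]
    rw [h3, bot_eq_zero]
    have : 0 < m * 2 := by omega
    exact_mod_cast this


/-- A mixed monomial. -/
def mon (p : (Fin n → ℕ) × (Fin n → ℕ)) (z : Fin n → ℂ) : ℂ :=
  (∏ i, z i ^ p.1 i) * ∏ i, (starRingEnd ℂ) (z i) ^ p.2 i

def PP (pt : Fin m → (Fin n → ℕ) × (Fin n → ℕ)) : Fin m → Fin n → ℝ :=
  fun j => Mixed.suppPt (pt j)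

def QQ (pt : Fin m → (Fin n → ℕ) × (Fin n → ℕ)) : Fin m → Fin n → ℝ :=
  fun j i => ((pt j).1 i : ℝ) - ((pt j).2 i : ℝ)

def fc (pt : Fin m → (Fin n → ℕ) × (Fin n → ℕ)) (c : Fin m → ℂ) : MixedCoeff n :=
  ∑ j, Finsupp.single (pt j) (c j)

def gS (pt : Fin m → (Fin n → ℕ) × (Fin n → ℕ)) (S : Finset (Fin m)) (c : Fin m → ℂ)
    (z : Fin n → ℂ) : ℂ := ∑ j ∈ S, c j * mon (pt j) z

lemma mon_exp (p : (Fin n → ℕ) × (Fin n → ℕ)) (w : Fin n → ℂ) :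
    mon p (fun i => Complex.exp (w i)) =
      Complex.exp (∑ i, (p.1 i * w i + p.2 i * (starRingEnd ℂ) (w i))) := by
  simp only [mon, ← Complex.exp_conj, ← Complex.exp_nat_mul, ← Complex.exp_sum, ← Complex.exp_add,
    Finset.sum_add_distrib]

lemma mon_mul (p : (Fin n → ℕ) × (Fin n → ℕ)) (z w : Fin n → ℂ) :
    mon p (fun i => z i * w i) = mon p z * mon p w := by
  simp only [mon, mul_pow, map_mul, Finset.prod_mul_distrib]
  ring

lemma exponent_eq (pt : Fin m → (Fin n → ℕ) × (Fin n → ℕ)) (j : Fin m) (w : Fin n → ℂ) :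
    (∑ i, (((pt j).1 i : ℂ) * w i + (pt j).2 i * (starRingEnd ℂ) (w i))) =
      ((PP pt j ⬝ᵥ (fun i => (w i).re) : ℝ) : ℂ) +
      ((QQ pt j ⬝ᵥ (fun i => (w i).im) : ℝ) : ℂ) * Complex.I := by
  simp only [dotProduct, Complex.ofReal_sum, Finset.sum_mul, ← Finset.sum_add_distrib]
  refine Finset.sum_congr rfl fun i _ => ?_
  apply Complex.ext <;> simp [PP, QQ, Mixed.suppPt] <;> ring

lemma eval_trunc (pt : Fin m → (Fin n → ℕ) × (Fin n → ℕ)) (S : Finset (Fin m)) (c : Fin m → ℂ)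
    (Δ : Set (Fin n → ℝ)) (hS : ∀ j, j ∈ S ↔ Mixed.suppPt (pt j) ∈ Δ) :
    Mixed.eval (Mixed.trunc (fc pt c) Δ) = gS pt S c := by
  classical
  funext z
  let ev : MixedCoeff n →+ ℂ := AddMonoidHom.mk' (fun f => Mixed.eval f z) (by
    intro f g
    simp only [Mixed.eval]
    apply Finsupp.sum_add_index'
    · intro p; simp
    · intro p a b; ring)
  have hev : ∀ p a, ev (Finsupp.single p a) = a * mon p z := by
    intro p a
    change Mixed.eval (Finsupp.single p a) z = _
    rw [Mixed.eval, Finsupp.sum_single_index (by simp), mon, mul_assoc]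
  have htr : Mixed.trunc (fc pt c) Δ = ∑ j ∈ S, Finsupp.single (pt j) (c j) := by
    have hlin : ∀ f g : MixedCoeff n, Mixed.trunc (f + g) Δ = Mixed.trunc f Δ + Mixed.trunc g Δ :=
      fun f g => Finsupp.filter_add
    let tr : MixedCoeff n →+ MixedCoeff n := AddMonoidHom.mk' (fun f => Mixed.trunc f Δ) hlin
    change tr (∑ j, Finsupp.single (pt j) (c j)) = _
    rw [map_sum]
    symm
    rw [← Finset.sum_subset (Finset.subset_univ S)]
    · refine Finset.sum_congr rfl fun j hj => ?_
      have hp : Mixed.suppPt (pt j) ∈ Δ := (hS j).1 hj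
      change _ = Mixed.trunc (Finsupp.single (pt j) (c j)) Δ
      unfold Mixed.trunc
      rw [Finsupp.filter_single_of_pos]
      exact hp
    · intro j _ hj
      have hn : Mixed.suppPt (pt j) ∉ Δ := fun h => hj ((hS j).2 h)
      change Mixed.trunc (Finsupp.single (pt j) (c j)) Δ = 0
      unfold Mixed.trunc
      rw [Finsupp.filter_single_of_neg]
      exact hn
  change ev _ = _
  rw [htr, map_sum]
  simp only [hev, gS]

lemma mon_differentiable (p : (Fin n → ℕ) × (Fin n → ℕ)) : Differentiable ℝ (mon p) := by
  unfold mon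
  refine Differentiable.mul ?_ ?_
  · fun_prop
  · have h : ∀ i, Differentiable ℝ (fun z : Fin n → ℂ => (starRingEnd ℂ) (z i)) := fun i =>
      Complex.conjCLE.differentiable.comp (differentiable_apply i)
    fun_prop

lemma fderiv_gS (pt : Fin m → (Fin n → ℕ) × (Fin n → ℕ)) (S : Finset (Fin m)) (c : Fin m → ℂ)
    (z u : Fin n → ℂ) : fderiv ℝ (gS pt S c) z (fun i => z i * u i) =
      ∑ j ∈ S, c j * mon (pt j) z *
        ∑ i, (((pt j).1 i : ℂ) * u i + (pt j).2 i * (starRingEnd ℂ) (u i)) := by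
  have hd : Differentiable ℝ (gS pt S c) := by
    unfold gS
    refine Differentiable.fun_sum fun j _ => ?_
    exact (mon_differentiable (pt j)).const_mul (c j)
  let γ : ℝ → Fin n → ℂ := fun t i => z i * Complex.exp ((t : ℂ) * u i)
  have hγ0 : γ 0 = z := by funext i; simp [γ]
  have hexp : ∀ v : ℂ, HasDerivAt (fun t : ℝ => Complex.exp ((t : ℂ) * v)) v 0 := by
    intro v
    have h1 : HasDerivAt (fun t : ℝ => (t : ℂ) * v) v 0 := by
      simpa using (Complex.ofRealCLM.hasDerivAt (x := (0:ℝ))).mul_const v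
    simpa using h1.cexp
  have hγ : HasDerivAt γ (fun i => z i * u i) 0 := by
    rw [hasDerivAt_pi]
    intro i
    exact (hexp (u i)).const_mul (z i)
  have h1 : HasDerivAt (gS pt S c ∘ γ) (fderiv ℝ (gS pt S c) z (fun i => z i * u i)) 0 := by
    apply HasFDerivAt.comp_hasDerivAt (0:ℝ) _ hγ
    rw [hγ0]
    exact (hd z).hasFDerivAt
  have h2 : HasDerivAt (gS pt S c ∘ γ) (∑ j ∈ S, c j * mon (pt j) z *
        ∑ i, (((pt j).1 i : ℂ) * u i + (pt j).2 i * (starRingEnd ℂ) (u i))) 0 := by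
    have : gS pt S c ∘ γ = fun t : ℝ => ∑ j ∈ S, c j * mon (pt j) z *
        Complex.exp ((t : ℂ) *
          ∑ i, (((pt j).1 i : ℂ) * u i + (pt j).2 i * (starRingEnd ℂ) (u i))) := by
      funext t
      simp only [Function.comp, gS, γ]
      refine Finset.sum_congr rfl fun j _ => ?_
      rw [mon_mul, mon_exp, mul_assoc, Finset.mul_sum]
      congr 4
      funext i
      simp only [map_mul, Complex.conj_ofReal]
      ring
    rw [this]
    exact HasDerivAt.fun_sum fun j _ => (hexp _).const_mul _
  exact h1.unique h2

lemma not_surj_iff {E : Type*} [AddCommGroup E] [Module ℝ E] (L : E →ₗ[ℝ] ℂ) :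
    ¬ Function.Surjective L ↔ ∃ l : ℂ, l ≠ 0 ∧ ∀ v, (l * L v).re = 0 := by
  constructor
  · intro h
    have hlt : LinearMap.range L < ⊤ := lt_top_iff_ne_top.2 (fun h' => h (LinearMap.range_eq_top.1 h'))
    obtain ⟨f, hf, hle⟩ := Submodule.exists_le_ker_of_lt_top _ hlt
    have hfv : ∀ w : ℂ, f w = (((f 1 : ℂ) - (f Complex.I : ℂ) * Complex.I) * w).re := by
      intro w
      have : w = w.re • (1:ℂ) + w.im • Complex.I := by
        apply Complex.ext <;> simp
      conv_lhs => rw [this]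
      rw [map_add, map_smul, map_smul]
      simp
      ring
    refine ⟨(f 1 : ℂ) - (f Complex.I : ℂ) * Complex.I, ?_, ?_⟩
    · intro h0
      apply hf
      ext w
      rw [hfv, h0]; simp
    · intro v
      rw [← hfv]
      exact hle ⟨v, rfl⟩
  · rintro ⟨l, hl, h⟩ hs
    obtain ⟨v, hv⟩ := hs ((starRingEnd ℂ) l)
    have := h v
    rw [hv, Complex.mul_conj] at this
    simp at this
    exact hl this

lemma re_formula (pt : Fin m → (Fin n → ℕ) × (Fin n → ℕ)) (S : Finset (Fin m)) (b : Fin m → ℂ)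
    (l : ℂ) (u : Fin n → ℂ) :
    (l * ∑ j ∈ S, b j * ∑ i, (((pt j).1 i : ℂ) * u i + (pt j).2 i * (starRingEnd ℂ) (u i))).re =
    ∑ i, ((u i).re * (∑ j ∈ S, (l * b j).re * PP pt j i) -
      (u i).im * ∑ j ∈ S, (l * b j).im * QQ pt j i) := by
  simp only [Finset.mul_sum, Complex.re_sum, ← Finset.sum_sub_distrib]
  rw [Finset.sum_comm]
  refine Finset.sum_congr rfl fun i _ => Finset.sum_congr rfl fun j _ => ?_
  simp [PP, QQ, Mixed.suppPt]
  ring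

lemma sing_iff (pt : Fin m → (Fin n → ℕ) × (Fin n → ℕ)) (S : Finset (Fin m)) (c : Fin m → ℂ)
    (z : Fin n → ℂ) (hz : ∀ i, z i ≠ 0) :
    ¬ Function.Surjective ⇑(fderiv ℝ (gS pt S c) z) ↔ ∃ l : ℂ, l ≠ 0 ∧
      ∀ i, ∑ j ∈ S, (l * (c j * mon (pt j) z)).re * PP pt j i = 0 ∧
        ∑ j ∈ S, (l * (c j * mon (pt j) z)).im * QQ pt j i = 0 := by
  have h0 := not_surj_iff (fderiv ℝ (gS pt S c) z).toLinearMap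
  rw [ContinuousLinearMap.coe_coe] at h0
  rw [h0]
  refine exists_congr fun l => and_congr_right fun _ => ?_
  have key : ∀ u : Fin n → ℂ, (l * fderiv ℝ (gS pt S c) z (fun i => z i * u i)).re =
      ∑ i, ((u i).re * (∑ j ∈ S, (l * (c j * mon (pt j) z)).re * PP pt j i) -
      (u i).im * ∑ j ∈ S, (l * (c j * mon (pt j) z)).im * QQ pt j i) := by
    intro u
    rw [fderiv_gS, re_formula pt S (fun j => c j * mon (pt j) z) l u]
  constructor
  · intro h i
    constructor
    · have h1 := key (Pi.single i 1)
      rw [h, Finset.sum_eq_single i] at h1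
      · simpa using h1.symm
      · intro k _ hk; simp [hk]
      · simp
    · have h1 := key (Pi.single i Complex.I)
      rw [h, Finset.sum_eq_single i] at h1
      · simpa using h1.symm
      · intro k _ hk; simp [hk]
      · simp
  · intro h v
    have hv : v = fun i => z i * (v i / z i) := by
      funext i
      field_simp [hz i]
    have := key (fun i => v i / z i)
    rw [← hv] at this
    rw [this]
    exact Finset.sum_eq_zero fun i _ => by rw [(h i).1, (h i).2]; simp

lemma bad_iff (pt : Fin m → (Fin n → ℕ) × (Fin n → ℕ)) (S : Finset (Fin m)) (c : Fin m → ℂ) :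
    Bad (PP pt) (QQ pt) S c ↔ ∃ z : Fin n → ℂ, (∀ i, z i ≠ 0) ∧ gS pt S c z = 0 ∧
      ¬ Function.Surjective ⇑(fderiv ℝ (gS pt S c) z) := by
  have htw : ∀ (w : Fin n → ℂ) (φ : ℝ) (j : Fin m),
      tw (PP pt) (QQ pt) (fun i => (w i).re) (fun i => (w i).im) φ c j =
      Complex.exp (φ * Complex.I) * (c j * mon (pt j) (fun i => Complex.exp (w i))) := by
    intro w φ j
    rw [mon_exp, exponent_eq, tw, mul_left_comm, ← Complex.exp_add]
    congr 2
    push_cast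
    ring
  constructor
  · rintro ⟨x, θ, φ, -, -, hD⟩
    let w : Fin n → ℂ := fun i => (x i : ℂ) + (θ i : ℂ) * Complex.I
    have hx : x = fun i => (w i).re := by funext i; simp [w]
    have hθ : θ = fun i => (w i).im := by funext i; simp [w]
    rw [hx, hθ] at hD
    refine ⟨fun i => Complex.exp (w i), fun i => Complex.exp_ne_zero _, ?_, ?_⟩
    · have := hD.1
      simp only [htw, ← Finset.mul_sum] at this
      exact (mul_eq_zero.1 this).resolve_left (Complex.exp_ne_zero _)
    · rw [sing_iff _ _ _ _ (fun i => Complex.exp_ne_zero _)]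
      refine ⟨Complex.exp (φ * Complex.I), Complex.exp_ne_zero _, fun i => ?_⟩
      have := hD.2 i
      simpa only [htw] using this
  · rintro ⟨z, hz, h0, hs⟩
    rw [sing_iff _ _ _ _ hz] at hs
    obtain ⟨l, hl, hs⟩ := hs
    have hzw : z = fun i => Complex.exp (Complex.log (z i)) := by
      funext i; rw [Complex.exp_log (hz i)]
    refine ⟨fun i => (Complex.log (z i)).re, fun i => (Complex.log (z i)).im, Complex.arg l,
      fun i => ?_, ?_, ?_⟩
    · simp only [Complex.log_im]
      exact ⟨(Complex.neg_pi_lt_arg _).le, Complex.arg_le_pi _⟩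
    · exact ⟨(Complex.neg_pi_lt_arg _).le, Complex.arg_le_pi _⟩
    · have hb : Deg (PP pt) (QQ pt) S (fun j => l * (c j * mon (pt j) z)) := by
        refine ⟨?_, hs⟩
        rw [← Finset.mul_sum]
        change l * gS pt S c z = 0
        rw [h0, mul_zero]
      refine hb.smul (‖l‖⁻¹) fun j _ => ?_
      rw [htw, ← hzw]
      have h1 := Complex.norm_mul_exp_arg_mul_I l
      have h2 : (‖l‖ : ℂ) ≠ 0 := by simpa using hl
      have h3 : Complex.exp (Complex.arg l * Complex.I) = ((‖l‖⁻¹ : ℝ) : ℂ) * l := by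
        nth_rewrite 3 [← h1]
        push_cast
        field_simp
      rw [h3, mul_assoc]

/-- the full polytope -/
def CC (pt : Fin m → (Fin n → ℕ) × (Fin n → ℕ)) : Set (Fin n → ℝ) :=
  convexHull ℝ (insert 0 (Set.range fun j => Mixed.suppPt (pt j)))

lemma fc_apply (pt : Fin m → (Fin n → ℕ) × (Fin n → ℕ)) (hpt : Function.Injective pt)
    (c : Fin m → ℂ) (j : Fin m) : fc pt c (pt j) = c j := by
  classical
  simp [fc, Finsupp.finsetSum_apply, Finsupp.single_apply, hpt.eq_iff]

lemma fc_supp (pt : Fin m → (Fin n → ℕ) × (Fin n → ℕ)) (hpt : Function.Injective pt)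
    (c : Fin m → ℂ) : Mixed.suppPts (fc pt c) = {x | ∃ j, c j ≠ 0 ∧ Mixed.suppPt (pt j) = x} := by
  classical
  ext x
  simp only [Mixed.suppPts, Set.mem_image, Finset.mem_coe, Finsupp.mem_support_iff]
  constructor
  · rintro ⟨p, hp, rfl⟩
    have : ∃ j, pt j = p := by
      by_contra hcon
      push Not at hcon
      apply hp
      simp [fc, Finsupp.finsetSum_apply, Finsupp.single_apply, hcon]
    obtain ⟨j, rfl⟩ := this
    rw [fc_apply pt hpt] at hp
    exact ⟨j, hp, rfl⟩
  · rintro ⟨j, hj, rfl⟩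
    exact ⟨pt j, by rwa [fc_apply pt hpt], rfl⟩

lemma dot_le_of_hull {s : Set (Fin n → ℝ)} (a : Fin n → ℝ) (r : ℝ) (h : ∀ x ∈ s, x ⬝ᵥ a ≤ r) :
    ∀ x ∈ convexHull ℝ s, x ⬝ᵥ a ≤ r := by
  have hconv : Convex ℝ {x : Fin n → ℝ | x ⬝ᵥ a ≤ r} :=
    convex_halfSpace_le ⟨fun x y => add_dotProduct x y a, fun c x => smul_dotProduct c x a⟩ r
  exact fun x hx => convexHull_min h hconv hx

lemma dot_lt_of_hull {s : Set (Fin n → ℝ)} (a : Fin n → ℝ) (r : ℝ) (h : ∀ x ∈ s, x ⬝ᵥ a < r) :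
    ∀ x ∈ convexHull ℝ s, x ⬝ᵥ a < r := by
  have hconv : Convex ℝ {x : Fin n → ℝ | x ⬝ᵥ a < r} :=
    convex_halfSpace_lt ⟨fun x y => add_dotProduct x y a, fun c x => smul_dotProduct c x a⟩ r
  exact fun x hx => convexHull_min h hconv hx

lemma zero_mem_CC (pt : Fin m → (Fin n → ℕ) × (Fin n → ℕ)) : (0 : Fin n → ℝ) ∈ CC pt :=
  subset_convexHull _ _ (Set.mem_insert _ _)

lemma pt_mem_CC (pt : Fin m → (Fin n → ℕ) × (Fin n → ℕ)) (j : Fin m) : PP pt j ∈ CC pt :=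
  subset_convexHull _ _ (Set.mem_insert_of_mem _ ⟨j, rfl⟩)

/-- Faces not containing zero correspond to admissible sets. -/
lemma adm_iff (pt : Fin m → (Fin n → ℕ) × (Fin n → ℕ)) (S : Finset (Fin m)) :
    Adm (PP pt) S ↔ ∃ Δ, Mixed.IsFaceOf (CC pt) Δ ∧ (0 : Fin n → ℝ) ∉ Δ ∧
      ∀ j, j ∈ S ↔ Mixed.suppPt (pt j) ∈ Δ := by
  constructor
  · rintro ⟨⟨j0, hj0⟩, a, ha, haS⟩
    have hle : ∀ x ∈ CC pt, x ⬝ᵥ a ≤ 1 := by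
      apply dot_le_of_hull
      rintro x (rfl | ⟨j, rfl⟩)
      · simp
      · exact ha j
    have hmem : ∀ x, x ∈ {x ∈ CC pt | ∀ y ∈ CC pt, ∑ i, (-a) i * x i ≤ ∑ i, (-a) i * y i} ↔
        x ∈ CC pt ∧ x ⬝ᵥ a = 1 := by
      intro x
      have hd : ∀ x : Fin n → ℝ, ∑ i, (-a) i * x i = - (x ⬝ᵥ a) := by
        intro x
        simp [dotProduct, mul_comm]
      simp only [hd, Set.mem_ofPred_eq, neg_le_neg_iff]
      refine and_congr_right fun hx => ⟨fun h => ?_, fun h y hy => ?_⟩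
      · have := h _ (pt_mem_CC pt j0)
        rw [(haS j0).1 hj0] at this
        exact le_antisymm (hle x hx) this
      · rw [h]; exact hle y hy
    refine ⟨_, ⟨?_, Or.inr ⟨-a, rfl⟩⟩, ?_, ?_⟩
    · exact ⟨_, (hmem _).2 ⟨pt_mem_CC pt j0, (haS j0).1 hj0⟩⟩
    · rw [hmem]; simp
    · intro j
      rw [hmem, haS]
      exact ⟨fun h => ⟨pt_mem_CC pt j, h⟩, fun h => h.2⟩
  · rintro ⟨Δ, ⟨⟨x0, hx0⟩, hΔ⟩, h0, hS⟩
    rcases hΔ with rfl | ⟨a, rfl⟩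
    · exact absurd (zero_mem_CC pt) h0
    have hd : ∀ x : Fin n → ℝ, ∑ i, a i * x i = x ⬝ᵥ a := by
      intro x
      simp [dotProduct, mul_comm]
    simp only [hd, Set.mem_ofPred_eq] at hx0 h0 hS
    obtain ⟨hxC, hmin⟩ := hx0
    set M := x0 ⬝ᵥ a with hM
    have hM0 : M < 0 := by
      refine lt_of_le_of_ne (by simpa using hmin 0 (zero_mem_CC pt)) fun h => h0 ⟨zero_mem_CC pt, ?_⟩
      intro y hy
      simpa [← h] using hmin y hy
    have hv : ∀ x : Fin n → ℝ, x ⬝ᵥ (M⁻¹ • a) = (x ⬝ᵥ a) / M := by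
      intro x
      rw [dotProduct_smul, smul_eq_mul]; ring
    have hS' : ∀ j, j ∈ S ↔ PP pt j ⬝ᵥ (M⁻¹ • a) = 1 := by
      intro j
      rw [hS, hv, div_eq_one_iff_eq hM0.ne]
      refine ⟨fun h => le_antisymm (h.2 x0 hxC) (hmin _ h.1), fun h => ⟨pt_mem_CC pt j, fun y hy => ?_⟩⟩
      change PP pt j ⬝ᵥ a ≤ _
      rw [h]; exact hmin y hy
    have hle : ∀ j, PP pt j ⬝ᵥ (M⁻¹ • a) ≤ 1 := by
      intro j
      rw [hv, div_le_one_of_neg hM0]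
      exact hmin _ (pt_mem_CC pt j)
    refine ⟨?_, M⁻¹ • a, hle, hS'⟩
    by_contra hne
    rw [Finset.not_nonempty_iff_eq_empty] at hne
    have : x0 ⬝ᵥ (M⁻¹ • a) < 1 := by
      refine dot_lt_of_hull _ _ ?_ x0 hxC
      rintro x (rfl | ⟨j, rfl⟩)
      · simp
      · refine lt_of_le_of_ne (hle j) fun h => ?_
        have := (hS' j).2 h
        simp [hne] at this
    rw [hv, div_self hM0.ne] at this
    exact lt_irrefl _ this

lemma gamma0_sub (pt : Fin m → (Fin n → ℕ) × (Fin n → ℕ)) (hpt : Function.Injective pt)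
    (c : Fin m → ℂ) : Mixed.Gamma0 (fc pt c) ⊆ CC pt := by
  apply convexHull_mono
  rw [fc_supp pt hpt]
  apply Set.insert_subset_insert
  rintro _ ⟨j, _, rfl⟩
  exact ⟨j, rfl⟩

lemma gamma0_eq (pt : Fin m → (Fin n → ℕ) × (Fin n → ℕ)) (hpt : Function.Injective pt)
    (c : Fin m → ℂ) :
    Mixed.GammaPlusSet (fc pt c) = {x | ∃ Δ, Mixed.IsFaceOf (CC pt) Δ ∧ (0 : Fin n → ℝ) ∉ Δ ∧ x ∈ Δ}
      ↔ Mixed.Gamma0 (fc pt c) = CC pt := by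
  constructor
  · intro h
    refine Set.Subset.antisymm (gamma0_sub pt hpt c) ?_
    refine convexHull_min ?_ (convex_convexHull _ _)
    have hz : (0 : Fin n → ℝ) ∈ Mixed.Gamma0 (fc pt c) :=
      subset_convexHull _ _ (Set.mem_insert _ _)
    rintro x (rfl | ⟨j, rfl⟩)
    · exact hz
    by_contra hj
    have hfin : (insert 0 (Mixed.suppPts (fc pt c))).Finite :=
      ((Finset.finite_toSet _).image _).insert _
    have hcl : IsClosed (Mixed.Gamma0 (fc pt c)) := hfin.isClosed_convexHull ℝ
    obtain ⟨f, r, hf1, hf2⟩ := geometric_hahn_banach_closed_point (convex_convexHull _ _) hcl hj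
    let a : Fin n → ℝ := fun i => - f (Pi.single i 1)
    have hfa : ∀ x : Fin n → ℝ, ∑ i, a i * x i = - f x := by
      intro x
      have : f x = ∑ i, x i * f (Pi.single i 1) := by
        conv_lhs => rw [pi_eq_sum_univ' x]
        rw [map_sum]
        refine Finset.sum_congr rfl fun i _ => ?_
        rw [map_smul, smul_eq_mul]
      rw [this, ← Finset.sum_neg_distrib]
      refine Finset.sum_congr rfl fun i _ => ?_
      simp only [a]; ring
    have hcpt : IsCompact (CC pt) := ((Set.finite_range _).insert _).isCompact_convexHull ℝ
    obtain ⟨x, hx, hmax⟩ := hcpt.exists_isMaxOn ⟨0, zero_mem_CC pt⟩ f.continuous.continuousOn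
    have hxj : f (Mixed.suppPt (pt j)) ≤ f x := hmax (pt_mem_CC pt j)
    have hxG : x ∈ Mixed.GammaPlusSet (fc pt c) := by
      rw [h]
      have hxm : x ∈ {x ∈ CC pt | ∀ y ∈ CC pt, ∑ i, a i * x i ≤ ∑ i, a i * y i} := by
        refine ⟨hx, fun y hy => ?_⟩
        rw [hfa, hfa]
        exact neg_le_neg (hmax hy)
      refine ⟨_, ⟨⟨x, hxm⟩, Or.inr ⟨a, rfl⟩⟩, ?_, hxm⟩
      rintro ⟨_, h2⟩
      have := h2 x hx
      rw [hfa, hfa] at this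
      have h3 := hf1 0 hz
      simp only [map_zero] at this h3
      have h4 : r < f (Mixed.suppPt (pt j)) := hf2
      linarith
    obtain ⟨Δ, ⟨⟨_, hΔ⟩, _⟩, hxΔ⟩ := hxG
    have hxg : x ∈ Mixed.Gamma0 (fc pt c) := by
      rcases hΔ with rfl | ⟨_, rfl⟩
      · exact hxΔ
      · exact hxΔ.1
    have h3 := hf1 x hxg
    have h4 : r < f (Mixed.suppPt (pt j)) := hf2
    linarith
  · intro h
    ext x
    simp only [Mixed.GammaPlusSet, Mixed.IsGammaPlusFace, h, Set.mem_ofPred_eq, and_assoc]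

lemma nondeg_iff (pt : Fin m → (Fin n → ℕ) × (Fin n → ℕ)) (c : Fin m → ℂ)
    (h : Mixed.Gamma0 (fc pt c) = CC pt) :
    Mixed.NewtonNonDeg (fc pt c) ↔ ¬ ∃ S, Adm (PP pt) S ∧ Bad (PP pt) (QQ pt) S c := by
  classical
  constructor
  · rintro hN ⟨S, hA, hB⟩
    obtain ⟨Δ, h1, h2, h3⟩ := (adm_iff pt S).1 hA
    obtain ⟨z, hz, h0, hs⟩ := (bad_iff pt S c).1 hB
    refine hN Δ ⟨by rwa [h], h2⟩ z hz ?_ ?_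
    · rw [eval_trunc pt S c Δ h3]; exact h0
    · change ¬ Function.Surjective ⇑(fderiv ℝ (Mixed.eval (Mixed.trunc (fc pt c) Δ)) z)
      rw [eval_trunc pt S c Δ h3]; exact hs
  · intro hN Δ hΔ z hz h0 hs
    have hS : ∀ j, j ∈ Finset.univ.filter (fun j => Mixed.suppPt (pt j) ∈ Δ) ↔
      Mixed.suppPt (pt j) ∈ Δ := by simp
    change ¬ Function.Surjective ⇑(fderiv ℝ (Mixed.eval (Mixed.trunc (fc pt c) Δ)) z) at hs
    rw [eval_trunc pt _ c Δ hS] at h0 hs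
    refine hN ⟨_, (adm_iff pt _).2 ⟨Δ, ?_, hΔ.2, hS⟩, (bad_iff pt _ c).2 ⟨z, hz, h0, hs⟩⟩
    rw [← h]; exact hΔ.1

lemma isOpen_gamma0 (pt : Fin m → (Fin n → ℕ) × (Fin n → ℕ)) (hpt : Function.Injective pt) :
    IsOpen {c | Mixed.Gamma0 (fc pt c) = CC pt} := by
  rw [isOpen_iff_mem_nhds]
  intro c0 (hc0 : Mixed.Gamma0 (fc pt c0) = CC pt)
  have : ∀ᶠ c in 𝓝 c0, ∀ j, c0 j ≠ 0 → c j ≠ 0 := by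
    rw [Filter.eventually_all]
    intro j
    by_cases h : c0 j = 0
    · simp [h]
    · filter_upwards [(continuous_apply j).continuousAt.eventually_ne h] with c hc _ using hc
  filter_upwards [this] with c hc
  refine Set.Subset.antisymm (gamma0_sub pt hpt c) ?_
  rw [← hc0]
  apply convexHull_mono
  rw [fc_supp pt hpt, fc_supp pt hpt]
  apply Set.insert_subset_insert
  rintro _ ⟨j, hj, rfl⟩
  exact ⟨j, hc j hj, rfl⟩

lemma dense_gamma0 (pt : Fin m → (Fin n → ℕ) × (Fin n → ℕ)) (hpt : Function.Injective pt) :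
    Dense {c | Mixed.Gamma0 (fc pt c) = CC pt} := by
  have hd : Dense (Set.pi Set.univ (fun _ : Fin m => ({0}ᶜ : Set ℂ))) :=
    dense_pi _ (fun i _ => dense_compl_singleton 0)
  refine hd.mono fun c hc => ?_
  simp only [Set.mem_pi, Set.mem_univ, forall_true_left, Set.mem_compl_iff,
    Set.mem_singleton_iff] at hc
  change convexHull ℝ _ = convexHull ℝ _
  rw [fc_supp pt hpt]
  congr 2
  ext x
  simp [hc]

end NND

/-- Newton non-degeneracy with fixed Newton boundary at infinity is an
open dense condition on the coefficients. -/
theorem newton_nondeg_open_dense {n m : ℕ} (hn : 1 ≤ n) (hm : 1 ≤ m)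
    (pt : Fin m → (Fin n → ℕ) × (Fin n → ℕ)) (hpt : Function.Injective pt)
    (Gam : Set (Fin n → ℝ))
    (hGam : Gam = {x | ∃ Δ, Mixed.IsFaceOf
        (convexHull ℝ (insert 0 (Set.range fun j => Mixed.suppPt (pt j)))) Δ ∧
        (0 : Fin n → ℝ) ∉ Δ ∧ x ∈ Δ}) :
    IsOpen {c : Fin m → ℂ |
        Mixed.GammaPlusSet (∑ j, Finsupp.single (pt j) (c j)) = Gam ∧
        Mixed.NewtonNonDeg (∑ j, Finsupp.single (pt j) (c j))} ∧
    Dense {c : Fin m → ℂ |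
        Mixed.GammaPlusSet (∑ j, Finsupp.single (pt j) (c j)) = Gam ∧
        Mixed.NewtonNonDeg (∑ j, Finsupp.single (pt j) (c j))} := by
  have hset : {c : Fin m → ℂ |
        Mixed.GammaPlusSet (∑ j, Finsupp.single (pt j) (c j)) = Gam ∧
        Mixed.NewtonNonDeg (∑ j, Finsupp.single (pt j) (c j))} =
      {c | Mixed.Gamma0 (NND.fc pt c) = NND.CC pt} ∩
      {c | ∃ S, NND.Adm (NND.PP pt) S ∧ NND.Bad (NND.PP pt) (NND.QQ pt) S c}ᶜ := by
    ext c
    have h1 := NND.gamma0_eq pt hpt c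
    rw [show {x | ∃ Δ, Mixed.IsFaceOf (NND.CC pt) Δ ∧ (0 : Fin n → ℝ) ∉ Δ ∧ x ∈ Δ} = Gam from
      hGam.symm] at h1
    constructor
    · rintro ⟨h2, h3⟩
      exact ⟨h1.1 h2, (NND.nondeg_iff pt c (h1.1 h2)).1 h3⟩
    · rintro ⟨h2, h3⟩
      exact ⟨h1.2 h2, (NND.nondeg_iff pt c h2).2 h3⟩
  rw [hset]
  exact ⟨(NND.isOpen_gamma0 pt hpt).inter (NND.isClosed_bad _ _).isOpen_compl,
    (NND.dense_gamma0 pt hpt).inter_of_isOpen_left (NND.dense_good hm _ _)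
      (NND.isOpen_gamma0 pt hpt)⟩
end
end
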